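/- Under the zero-loss hypothesis, all four inclusions in the commutative square TP ↪ F_ε(P) ↪ F_ε(P) ∪ F_{2ε}(G) and TP ↪ F_{2ε}(G) ↪ F_ε(P) ∪ F_{2ε}(G) are deformation retractions; that is: F_ε(P) strongly deformation retracts onto TP; F_{2ε}(G) strongly deformation retracts onto TP; F_ε(P) ∪ F_{2ε}(G) strongly deformation retracts onto F_ε(P); and F_ε(P) ∪ F_{2ε}(G) strongly deformation retracts onto F_{2ε}(G). -/

import Mathlib

open Set Metric

noncomputable section

/-- The plane modeled as `Fin 2 → ℝ` with the Pi (sup) norm. -/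
abbrev Plane : Type := Fin 2 → ℝ

/-- The Euclidean plane (for Euclidean-norm disks and annuli). -/
abbrev EPlane : Type := EuclideanSpace ℝ (Fin 2)

/-- The closed unit pixel `[i-1,i] × [j-1,j]` for a pixel index `(i,j)`. -/
def pixel (p : ℕ × ℕ) : Set Plane :=
  {x | x 0 ∈ Set.Icc ((p.1 : ℝ) - 1) (p.1 : ℝ) ∧ x 1 ∈ Set.Icc ((p.2 : ℝ) - 1) (p.2 : ℝ)}

/-- A binary image `S` lies on the `h × w` grid `{1,…,h} × {1,…,w}`. -/
def OnGrid (S : Set (ℕ × ℕ)) (h w : ℕ) : Prop :=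
  S ⊆ Set.Icc 1 h ×ˢ Set.Icc 1 w

/-- The foreground `F(S)` of a binary image. -/
def fg (S : Set (ℕ × ℕ)) : Set Plane := ⋃ p ∈ S, pixel p

/-- Closed `ε`-thickening `D_ε(X)` with respect to the sup norm. -/
def thick (ε : ℝ) (X : Set Plane) : Set Plane := {y | ∃ x ∈ X, ‖x - y‖ ≤ ε}

/-- `C` is a connected component of `A` (as a subset of the plane). -/
def IsCompOf (C A : Set Plane) : Prop := ∃ x ∈ A, C = connectedComponentIn A x

/-- Two subsets share a boundary edge if their closures intersect in an infinite set. -/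
def SharesEdge (C D : Set Plane) : Prop := (closure C ∩ closure D).Infinite

/-- `X` strongly deformation retracts onto `A`. -/
def SDR (X A : Set Plane) : Prop :=
  ∃ H : C(↥X × unitInterval, ↥X),
    (∀ x, H (x, 0) = x) ∧ (∀ x, ((H (x, 1) : Plane)) ∈ A) ∧
    (∀ a : ↥X, (a : Plane) ∈ A → ∀ t, H (a, t) = a)

def TPset (P G : Set (ℕ × ℕ)) (ε : ℝ) : Set Plane := thick ε (fg P) ∩ thick (2 * ε) (fg G)
def TNset (P G : Set (ℕ × ℕ)) (ε : ℝ) : Set Plane := (thick ε (fg P))ᶜ ∩ (thick (2 * ε) (fg G))ᶜ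
def FPset (P G : Set (ℕ × ℕ)) (ε : ℝ) : Set Plane := thick ε (fg P) ∩ (thick (2 * ε) (fg G))ᶜ
def FNset (P G : Set (ℕ × ℕ)) (ε : ℝ) : Set Plane := (thick ε (fg P))ᶜ ∩ thick (2 * ε) (fg G)

/-- A component `C` (of `FP` or `FN`) is regular: exactly one component of `TP` and exactly
one component of `TN` share a boundary edge with it. -/
def RegularComp (P G : Set (ℕ × ℕ)) (ε : ℝ) (C : Set Plane) : Prop :=
  (∃! T : Set Plane, IsCompOf T (TPset P G ε) ∧ SharesEdge T C) ∧
  (∃! T : Set Plane, IsCompOf T (TNset P G ε) ∧ SharesEdge T C)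

/-- The zero-loss hypothesis: every component of `FP` and every component of `FN` is regular. -/
def ZeroLoss (P G : Set (ℕ × ℕ)) (ε : ℝ) : Prop :=
  (∀ C : Set Plane, IsCompOf C (FPset P G ε) → RegularComp P G ε C) ∧
  (∀ C : Set Plane, IsCompOf C (FNset P G ε) → RegularComp P G ε C)

/-!
The boundary lines of the thickened pixels form a rectangular grid, and the two thickenings `A` and
`B` become closed subcomplexes of it whose boundaries have no common edge. It suffices to
deformation retract `A` onto `A ∩ B`: exchanging `A` and `B`, and gluing along `A ∩ B`, give the
other three retractions. The cells of `A \ B` are removed by elementary collapses.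

As every component of `A \ B` borders on `Aᶜ ∩ Bᶜ`, some square outside `B` has a free edge as long
as there are such squares. Once they are gone, a graph remains. Both sides of any of its edges
outside `B` are joined by dual paths to `Aᶜ ∩ Bᶜ`, in fact to the same component of it, since the
neighbour there is unique. By planar duality the edge is a bridge. A vertex farthest from `B` must
then be a leaf: if another edge at that vertex could also be continued to `B`, the unique neighbour
in `A ∩ B` would close a cycle through that edge. Hence leaves can be removed until `A ∩ B` is left.
-/

/-! ### Cells of the integer grid -/

/-- The cells of a rectangular grid, encoded by doubled coordinates: in each direction an even
integer `2 * i` stands for the `i`-th grid line and an odd integer `2 * i + 1` for the interval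
between the lines `i` and `i + 1`. -/
@[ext]
structure Cell where
  x : ℤ
  y : ℤ

/-- Incidence in one direction: `m' = m`, or the line `m` bounds the interval `m'`. -/
def Incident (m m' : ℤ) : Prop := m' = m ∨ (m % 2 = 0 ∧ (m' = m + 1 ∨ m' = m - 1))

namespace Incident

variable {a b c : ℤ}

lemma trans (hab : Incident a b) (hbc : Incident b c) : Incident a c := by
  unfold Incident at *; omega

lemma opposite (hb : Incident a b) (hc : Incident a c) (hb' : b % 2 = 1) (hc' : c % 2 = 1)
    (hne : b ≠ c) : a % 2 = 0 ∧ (b = a - 1 ∧ c = a + 1 ∨ b = a + 1 ∧ c = a - 1) := by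
  unfold Incident at *; omega

end Incident

namespace Cell

/-- The face relation: `s ≤ t` when the cell `s` lies in the closure of the cell `t`. -/
instance : PartialOrder Cell where
  le s t := Incident s.x t.x ∧ Incident s.y t.y
  le_refl s := ⟨.inl rfl, .inl rfl⟩
  le_trans _ _ _ h h' := ⟨h.1.trans h'.1, h.2.trans h'.2⟩
  le_antisymm s t := by simp only [Incident, Cell.ext_iff]; omega

lemma le_def {s t : Cell} : s ≤ t ↔ Incident s.x t.x ∧ Incident s.y t.y := Iff.rfl

/-- Cells of dimension zero. -/
def IsVertex (s : Cell) : Prop := s.x % 2 = 0 ∧ s.y % 2 = 0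

/-- Cells of dimension one. -/
def IsEdge (s : Cell) : Prop := (s.x % 2 = 0 ∧ s.y % 2 = 1) ∨ (s.x % 2 = 1 ∧ s.y % 2 = 0)

/-- Cells of dimension two. -/
def IsSquare (s : Cell) : Prop := s.x % 2 = 1 ∧ s.y % 2 = 1

/-- The cell `e` is an edge, and `s` and `t` are the squares on its two sides. -/
def IsBetween (s e t : Cell) : Prop :=
  (e.x % 2 = 0 ∧ e.y % 2 = 1 ∧ s.y = e.y ∧ t.y = e.y ∧
    (s.x = e.x - 1 ∧ t.x = e.x + 1 ∨ s.x = e.x + 1 ∧ t.x = e.x - 1)) ∨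
  (e.x % 2 = 1 ∧ e.y % 2 = 0 ∧ s.x = e.x ∧ t.x = e.x ∧
    (s.y = e.y - 1 ∧ t.y = e.y + 1 ∨ s.y = e.y + 1 ∧ t.y = e.y - 1))

namespace IsBetween

variable {s e t : Cell}

lemma symm (h : IsBetween s e t) : IsBetween t e s := by
  unfold IsBetween at *; omega

lemma isEdge (h : IsBetween s e t) : IsEdge e := by
  unfold IsBetween at h; unfold IsEdge; omega

lemma isSquare (h : IsBetween s e t) : IsSquare s := by
  unfold IsBetween at h; unfold IsSquare; omega

lemma lt_left (h : IsBetween s e t) : e < s := by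
  refine lt_of_le_of_ne ?_ ?_ <;> unfold IsBetween at h <;>
    simp only [le_def, Incident, ne_eq, Cell.ext_iff] <;> omega

lemma lt_right (h : IsBetween s e t) : e < t := h.symm.lt_left

lemma eq_or_eq_of_lt (h : IsBetween s e t) {r : Cell} (hr : e < r) : r = s ∨ r = t := by
  have hle := hr.le
  have hne := hr.ne
  unfold IsBetween at h
  simp only [le_def, Incident, ne_eq, Cell.ext_iff] at *
  omega

end IsBetween

lemma IsEdge.exists_isBetween {e : Cell} (he : IsEdge e) : ∃ s t, IsBetween s e t := by
  rcases he with h | h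
  · exact ⟨⟨e.x - 1, e.y⟩, ⟨e.x + 1, e.y⟩, .inl (by simp [h])⟩
  · exact ⟨⟨e.x, e.y - 1⟩, ⟨e.x, e.y + 1⟩, .inr (by simp [h])⟩

lemma exists_isVertex_le (s : Cell) : ∃ v, IsVertex v ∧ v ≤ s :=
  ⟨⟨s.x - s.x % 2, s.y - s.y % 2⟩, by simp only [IsVertex]; omega,
    by simp only [le_def, Incident]; omega⟩

/-- The graph on cells joining incident cells of `S`; its components are those of the union of the
cells in `S`. -/
def incidenceGraph (S : Set Cell) : SimpleGraph Cell :=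
  .fromRel fun s t => s ∈ S ∧ t ∈ S ∧ s ≤ t

/-- The graph on squares joining the two sides of each edge in `S`. -/
def dualGraph (S : Set Cell) : SimpleGraph Cell :=
  .fromRel fun s t => ∃ e ∈ S, IsBetween s e t

/-- The graph on vertices joining the two ends of each edge in `S`. -/
def edgeGraph (S : Set Cell) : SimpleGraph Cell :=
  .fromRel fun u v => ∃ e ∈ S, IsEdge e ∧ IsVertex u ∧ IsVertex v ∧ u ≤ e ∧ v ≤ e

variable {S S' : Set Cell} {s t : Cell}

lemma dualGraph_adj : (dualGraph S).Adj s t ↔ s ≠ t ∧ ∃ e ∈ S, IsBetween s e t := by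
  refine and_congr_right fun _ => or_iff_left_of_imp ?_
  rintro ⟨e, he, h⟩
  exact ⟨e, he, h.symm⟩

lemma edgeGraph_adj : (edgeGraph S).Adj s t ↔
    s ≠ t ∧ ∃ e ∈ S, IsEdge e ∧ IsVertex s ∧ IsVertex t ∧ s ≤ e ∧ t ≤ e := by
  refine and_congr_right fun _ => or_iff_left_of_imp ?_
  rintro ⟨e, he, hE, hs, ht, hse, hte⟩
  exact ⟨e, he, hE, ht, hs, hte, hse⟩

lemma incidenceGraph_reachable_of_le (hs : s ∈ S) (ht : t ∈ S) (h : s ≤ t) :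
    (incidenceGraph S).Reachable s t := by
  rcases eq_or_ne s t with rfl | hne
  · rfl
  · exact SimpleGraph.Adj.reachable ⟨hne, .inl ⟨hs, ht, h⟩⟩

lemma mem_of_incidenceGraph_reachable (h : (incidenceGraph S).Reachable s t) (hs : s ∈ S) :
    t ∈ S := by
  rw [SimpleGraph.reachable_iff_reflTransGen] at h
  induction h with
  | refl => exact hs
  | tail _ h _ => exact h.2.elim (·.2.1) (·.1)

lemma incidenceGraph_mono (h : S ⊆ S') : incidenceGraph S ≤ incidenceGraph S' := by
  rintro s t ⟨hne, hst⟩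
  exact ⟨hne, hst.imp (fun H => ⟨h H.1, h H.2.1, H.2.2⟩) fun H => ⟨h H.1, h H.2.1, H.2.2⟩⟩

lemma dualGraph_mono (h : S ⊆ S') : dualGraph S ≤ dualGraph S' := by
  intro s t hst
  obtain ⟨hne, e, he, hset⟩ := dualGraph_adj.1 hst
  exact dualGraph_adj.2 ⟨hne, e, h he, hset⟩

lemma dualGraph_reachable_of_isBetween {e : Cell} (h : IsBetween s e t) (he : e ∈ S) :
    (dualGraph S).Reachable s t := by
  rcases eq_or_ne s t with rfl | hne
  · rfl
  · exact SimpleGraph.Adj.reachable (dualGraph_adj.2 ⟨hne, e, he, h⟩)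

lemma edgeGraph_reachable_of_isEdge {e : Cell} (he : e ∈ S) (hE : IsEdge e) (hs : IsVertex s)
    (ht : IsVertex t) (hse : s ≤ e) (hte : t ≤ e) : (edgeGraph S).Reachable s t := by
  rcases eq_or_ne s t with rfl | hne
  · rfl
  · exact SimpleGraph.Adj.reachable (edgeGraph_adj.2 ⟨hne, e, he, hE, hs, ht, hse, hte⟩)

lemma edgeGraph_reachable_of_le (hS : IsLowerSet S) (hs : s ∈ S) {u v : Cell} (hu : IsVertex u)
    (hv : IsVertex v) (hus : u ≤ s) (hvs : v ≤ s) : (edgeGraph S).Reachable u v := by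
  rw [le_def] at hus hvs
  have hx : (edgeGraph S).Reachable u ⟨v.x, u.y⟩ := by
    rcases eq_or_ne u ⟨v.x, u.y⟩ with h | h
    · rw [← h]
    · refine edgeGraph_reachable_of_isEdge (e := ⟨s.x, u.y⟩)
        (hS (a := s) ⟨.inl rfl, hus.2⟩ hs) ?_ hu ⟨hv.1, hu.2⟩ ⟨hus.1, .inl rfl⟩ ⟨hvs.1, .inl rfl⟩
      simp only [IsEdge, IsVertex, Incident, ne_eq, Cell.ext_iff, and_true] at *
      omega
  have hy : (edgeGraph S).Reachable ⟨v.x, u.y⟩ v := by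
    rcases eq_or_ne ⟨v.x, u.y⟩ v with h | h
    · rw [h]
    · refine edgeGraph_reachable_of_isEdge (e := ⟨v.x, s.y⟩)
        (hS (a := s) ⟨hvs.1, .inl rfl⟩ hs) ?_ ⟨hv.1, hu.2⟩ hv ⟨.inl rfl, hus.2⟩ ⟨.inl rfl, hvs.2⟩
      simp only [IsEdge, IsVertex, Incident, ne_eq, Cell.ext_iff, true_and] at *
      omega
  exact hx.trans hy

lemma edgeGraph_reachable_of_incidenceGraph_reachable (hS : IsLowerSet S) (hs : s ∈ S)
    (h : (incidenceGraph S).Reachable s t) {u v : Cell} (hu : IsVertex u) (hus : u ≤ s)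
    (hv : IsVertex v) (hvt : v ≤ t) : (edgeGraph S).Reachable u v := by
  rw [SimpleGraph.reachable_iff_reflTransGen] at h
  induction h generalizing v with
  | refl => exact edgeGraph_reachable_of_le hS hs hu hv hus hvt
  | @tail b c _ hbc ih =>
    obtain ⟨-, ⟨-, hc, hle⟩ | ⟨-, -, hle⟩⟩ := hbc
    · obtain ⟨w, hw, hwb⟩ := exists_isVertex_le b
      exact (ih hw hwb).trans (edgeGraph_reachable_of_le hS hc hw hv (hwb.trans hle) hvt)
    · exact ih hv (hvt.trans hle)

/-- The doubled coordinates as a function. -/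
def coord (s : Cell) : Fin 2 → ℤ := ![s.x, s.y]

lemma le_iff_coord {i j : Fin 2} (hij : i ≠ j) :
    s ≤ t ↔ Incident (s.coord i) (t.coord i) ∧ Incident (s.coord j) (t.coord j) := by
  rw [le_def]
  obtain ⟨rfl, rfl⟩ | ⟨rfl, rfl⟩ : i = 0 ∧ j = 1 ∨ i = 1 ∧ j = 0 := by omega
  · rfl
  · exact and_comm

lemma eq_iff_coord {i j : Fin 2} (hij : i ≠ j) :
    s = t ↔ s.coord i = t.coord i ∧ s.coord j = t.coord j := by
  rw [Cell.ext_iff]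
  obtain ⟨rfl, rfl⟩ | ⟨rfl, rfl⟩ : i = 0 ∧ j = 1 ∨ i = 1 ∧ j = 0 := by omega
  · rfl
  · exact and_comm

end Cell

/-! ### Sets of cells invariant under pushing lines into intervals -/

/-- A choice, for every grid line, of one of the two adjacent intervals; intervals are fixed. -/
structure Push where
  toFun : ℤ → ℤ
  incident : ∀ m, Incident m (toFun m)
  odd : ∀ m, toFun m % 2 = 1

namespace Push

instance : CoeFun Push fun _ => ℤ → ℤ := ⟨toFun⟩

/-- The square into which a cell is pushed. -/
def square (ρ : Push) (s : Cell) : Cell := ⟨ρ s.x, ρ s.y⟩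

/-- A set of cells is invariant when membership of a cell does not change on pushing it in one
direction. In particular it is determined by the squares it contains. -/
structure Invariant (ρ : Push) (S : Set Cell) : Prop where
  x_iff : ∀ m n, (⟨m, n⟩ : Cell) ∈ S ↔ ⟨ρ m, n⟩ ∈ S
  y_iff : ∀ m n, (⟨m, n⟩ : Cell) ∈ S ↔ ⟨m, ρ n⟩ ∈ S

variable {ρ : Push} {S S' : Set Cell} {s e t : Cell}

lemma le_square (ρ : Push) (s : Cell) : s ≤ ρ.square s := ⟨ρ.incident _, ρ.incident _⟩

lemma isSquare_square (ρ : Push) (s : Cell) : (ρ.square s).IsSquare := ⟨ρ.odd _, ρ.odd _⟩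

lemma square_of_isSquare (h : s.IsSquare) : ρ.square s = s := by
  have hx := ρ.incident s.x
  have hy := ρ.incident s.y
  simp only [Incident, Cell.IsSquare, square, Cell.ext_iff] at *
  omega

namespace Invariant

lemma inter (hS : ρ.Invariant S) (hS' : ρ.Invariant S') : ρ.Invariant (S ∩ S') where
  x_iff m n := and_congr (hS.x_iff m n) (hS'.x_iff m n)
  y_iff m n := and_congr (hS.y_iff m n) (hS'.y_iff m n)

lemma compl (hS : ρ.Invariant S) : ρ.Invariant Sᶜ where
  x_iff m n := not_congr (hS.x_iff m n)
  y_iff m n := not_congr (hS.y_iff m n)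

lemma square_mem (hS : ρ.Invariant S) (hs : s ∈ S) : ρ.square s ∈ S :=
  (hS.y_iff _ _).1 ((hS.x_iff _ _).1 hs)

lemma reachable_square (hS : ρ.Invariant S) (hs : s ∈ S) :
    (Cell.incidenceGraph S).Reachable s (ρ.square s) :=
  Cell.incidenceGraph_reachable_of_le hs (hS.square_mem hs) (ρ.le_square s)

lemma mem_of_isBetween (hS : ρ.Invariant S) (h : Cell.IsBetween s e t) (hs : s ∈ S) (ht : t ∈ S) :
    e ∈ S := by
  obtain ⟨e₁, e₂⟩ := e
  obtain ⟨s₁, s₂⟩ := s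
  obtain ⟨t₁, t₂⟩ := t
  have h₁ := ρ.incident e₁
  have h₂ := ρ.incident e₂
  have o₁ := ρ.odd e₁
  have o₂ := ρ.odd e₂
  simp only [Incident, Cell.IsBetween] at *
  rcases h with ⟨he₁, -, rfl, rfl, hst⟩ | ⟨-, he₂, rfl, rfl, hst⟩
  · rw [hS.x_iff]
    obtain h | h : ρ e₁ = s₁ ∨ ρ e₁ = t₁ := by omega
    all_goals rwa [h]
  · rw [hS.y_iff]
    obtain h | h : ρ e₂ = s₂ ∨ ρ e₂ = t₂ := by omega
    all_goals rwa [h]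

lemma reachable_of_isBetween (hS : ρ.Invariant S) (h : Cell.IsBetween s e t) (hs : s ∈ S)
    (ht : t ∈ S) : (Cell.incidenceGraph S).Reachable s t :=
  have he := hS.mem_of_isBetween h hs ht
  (Cell.incidenceGraph_reachable_of_le he hs h.lt_left.le).symm.trans
    (Cell.incidenceGraph_reachable_of_le he ht h.lt_right.le)

lemma dualGraph_reachable_of_le (hS : ρ.Invariant S) (hS' : S.OrdConnected) (hs : s ∈ S)
    (ht : t ∈ S) (h : s ≤ t) : (Cell.dualGraph S).Reachable (ρ.square s) (ρ.square t) := by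
  have hm : (⟨t.x, s.y⟩ : Cell) ∈ S :=
    hS'.out hs ht ⟨⟨h.1, .inl rfl⟩, ⟨.inl rfl, h.2⟩⟩
  have hx : (Cell.dualGraph S).Reachable (ρ.square s) (ρ.square ⟨t.x, s.y⟩) := by
    by_cases hne : ρ s.x = ρ t.x
    · simp only [square, hne]; rfl
    · have hop := (ρ.incident _).opposite (h.1.trans (ρ.incident _)) (ρ.odd _) (ρ.odd _) hne
      exact Cell.dualGraph_reachable_of_isBetween (e := ⟨s.x, ρ s.y⟩)
        (.inl ⟨hop.1, ρ.odd _, rfl, rfl, hop.2⟩) ((hS.y_iff _ _).1 hs)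
  have hy : (Cell.dualGraph S).Reachable (ρ.square ⟨t.x, s.y⟩) (ρ.square t) := by
    by_cases hne : ρ s.y = ρ t.y
    · simp only [square, hne]; rfl
    · have hop := (ρ.incident _).opposite (h.2.trans (ρ.incident _)) (ρ.odd _) (ρ.odd _) hne
      exact Cell.dualGraph_reachable_of_isBetween (e := ⟨ρ t.x, s.y⟩)
        (.inr ⟨ρ.odd _, hop.1, rfl, rfl, hop.2⟩) ((hS.x_iff _ _).1 hm)
  exact hx.trans hy

lemma dualGraph_reachable (hS : ρ.Invariant S) (hS' : S.OrdConnected)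
    (h : (Cell.incidenceGraph S).Reachable s t) :
    (Cell.dualGraph S).Reachable (ρ.square s) (ρ.square t) := by
  rw [SimpleGraph.reachable_iff_reflTransGen] at h
  induction h with
  | refl => rfl
  | tail _ hbc ih =>
    obtain ⟨-, ⟨hb, hc, hle⟩ | ⟨hc, hb, hle⟩⟩ := hbc
    · exact ih.trans (hS.dualGraph_reachable_of_le hS' hb hc hle)
    · exact ih.trans (hS.dualGraph_reachable_of_le hS' hc hb hle).symm

/-- The hypothesis `hcorner` rules out that the two sets only touch diagonally at `v`. -/
lemma exists_isBetween_of_common_face (hS : ρ.Invariant S) (hS' : ρ.Invariant S')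
    (hdisj : Disjoint S S')
    (hcorner : ∀ ⦃p e q e' r⦄, Cell.IsBetween p e q → Cell.IsBetween q e' r → p ∈ S → r ∈ S' →
      q ∈ S ∨ q ∈ S')
    {v : Cell} (hvs : v ≤ s) (hvt : v ≤ t) (hs : s ∈ S) (ht : t ∈ S') :
    ∃ s' e t', Cell.IsBetween s' e t' ∧ v ≤ e ∧ s' ∈ S ∧ t' ∈ S' ∧
      (Cell.incidenceGraph S).Reachable s s' ∧ (Cell.incidenceGraph S').Reachable t t' := by
  have hp := hS.square_mem hs
  have hq := hS'.square_mem ht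
  have cs := hS.reachable_square hs
  have ct := hS'.reachable_square ht
  have hvp := hvs.trans (ρ.le_square s)
  have hvq := hvt.trans (ρ.le_square t)
  have sp := ρ.isSquare_square s
  have sq := ρ.isSquare_square t
  generalize ρ.square s = p at *
  generalize ρ.square t = q at *
  have hpq : p ≠ q := hdisj.ne_of_mem hp hq
  by_cases hx : p.x = q.x
  · have hy : p.y ≠ q.y := fun hy => hpq (Cell.ext hx hy)
    have hop := hvp.2.opposite hvq.2 sp.2 sq.2 hy
    exact ⟨p, ⟨p.x, v.y⟩, q, .inr ⟨sp.1, hop.1, rfl, hx.symm, hop.2⟩, ⟨hvp.1, .inl rfl⟩,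
      hp, hq, cs, ct⟩
  have hopx := hvp.1.opposite hvq.1 sp.1 sq.1 hx
  have hpm : Cell.IsBetween p ⟨v.x, p.y⟩ ⟨q.x, p.y⟩ := .inl ⟨hopx.1, sp.2, rfl, rfl, hopx.2⟩
  by_cases hy : p.y = q.y
  · exact ⟨p, ⟨v.x, p.y⟩, q, .inl ⟨hopx.1, sp.2, rfl, hy.symm, hopx.2⟩, ⟨.inl rfl, hvp.2⟩,
      hp, hq, cs, ct⟩
  have hopy := hvp.2.opposite hvq.2 sp.2 sq.2 hy
  have hmq : Cell.IsBetween ⟨q.x, p.y⟩ ⟨q.x, v.y⟩ q := .inr ⟨sq.1, hopy.1, rfl, rfl, hopy.2⟩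
  rcases hcorner hpm hmq hp hq with hm | hm
  · exact ⟨_, _, _, hmq, ⟨hvq.1, .inl rfl⟩, hm, hq,
      cs.trans (hS.reachable_of_isBetween hpm hp hm), ct⟩
  · exact ⟨_, _, _, hpm, ⟨.inl rfl, hvp.2⟩, hp, hm, cs,
      ct.trans (hS'.reachable_of_isBetween hmq.symm hq hm)⟩

end Invariant

end Push

/-! ### Discrete potentials and a Jordan lemma -/

section Potential

variable {M : Type*} [AddCommGroup M]

lemma exists_int_primitive (h : ℤ → M) : ∃ F : ℤ → M, F 0 = 0 ∧ ∀ i, F (i + 1) = F i + h i := by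
  let F (n : ℤ) : M := Int.inductionOn' n 0 0 (fun k _ x => x + h k) (fun k _ x => x - h (k - 1))
  refine ⟨F, Int.inductionOn'_self .., fun i => ?_⟩
  rcases le_or_gt 0 i with hi | hi
  · exact Int.inductionOn'_add_one hi
  · have hF : F (i + 1 - 1) = F (i + 1) - h (i + 1 - 1) := Int.inductionOn'_sub_one (by omega)
    rw [add_sub_cancel_right] at hF
    rw [hF, sub_add_cancel]

lemma exists_int_potential (h g : ℤ → ℤ → M)
    (hcurl : ∀ x y, h x y + g (x + 1) y = g x y + h x (y + 1)) :
    ∃ f : ℤ → ℤ → M, (∀ x y, f (x + 1) y = f x y + h x y) ∧ ∀ x y, f x (y + 1) = f x y + g x y := by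
  choose H H0 H1 using fun y => exists_int_primitive fun x => h x y
  obtain ⟨V, -, V1⟩ := exists_int_primitive (g 0)
  refine ⟨fun x y => V y + H y x, fun x y => by simp only [H1, add_assoc], fun x y => ?_⟩
  simp only [V1, add_assoc, add_right_inj]
  induction x using Int.induction_on with
  | zero => simp [H0]
  | succ i ih => grind
  | pred i ih => grind

end Potential

namespace Cell

open scoped Classical in
/-- The indicator function of a single cell, as a cochain with coefficients in `ZMod 2`. -/
def indicator (e : Cell) : Cell → ZMod 2 := Pi.single e 1

/-- The sum of a cochain modulo 2 over the four sides of a square. -/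
def curl (c : Cell → ZMod 2) (q : Cell) : ZMod 2 :=
  c ⟨q.x + 1, q.y⟩ + c ⟨q.x - 1, q.y⟩ + c ⟨q.x, q.y + 1⟩ + c ⟨q.x, q.y - 1⟩

variable {s e t q u v : Cell} {K : Set Cell}

lemma curl_add (c d : Cell → ZMod 2) (q : Cell) : curl (c + d) q = curl c q + curl d q := by
  simp only [curl, Pi.add_apply]; ring

lemma curl_indicator (h : IsBetween s e t) (hq : q.IsSquare) :
    curl (indicator e) q = indicator s q + indicator t q := by
  obtain ⟨e₁, e₂⟩ := e
  obtain ⟨s₁, s₂⟩ := s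
  obtain ⟨t₁, t₂⟩ := t
  simp only [IsSquare, IsBetween] at hq h
  simp only [curl, indicator, Pi.single_apply, Cell.ext_iff]
  rcases h with ⟨h₁, -, rfl, rfl, ⟨rfl, rfl⟩ | ⟨rfl, rfl⟩⟩ |
    ⟨-, h₂, rfl, rfl, ⟨rfl, rfl⟩ | ⟨rfl, rfl⟩⟩
  all_goals grind

lemma exists_cochain_of_dualGraph_reachable (h : (dualGraph Kᶜ).Reachable s t) :
    ∃ c : Cell → ZMod 2, (∀ e ∈ K, c e = 0) ∧
      ∀ q, q.IsSquare → curl c q = indicator s q + indicator t q := by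
  rw [SimpleGraph.reachable_iff_reflTransGen] at h
  induction h with
  | refl => exact ⟨0, fun _ _ => rfl, fun q _ => by simp [curl, CharTwo.add_self_eq_zero]⟩
  | @tail b d _ hbd ih =>
    obtain ⟨c, hcK, hc⟩ := ih
    obtain ⟨-, e, he, hbd⟩ := dualGraph_adj.1 hbd
    refine ⟨c + indicator e, fun x hx => ?_, fun q hq => ?_⟩
    · have hne : x ≠ e := fun h => he (h ▸ hx)
      simp [hcK x hx, indicator, hne]
    · rw [curl_add, hc q hq, curl_indicator hbd hq, add_assoc, CharTwo.add_cancel_left]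

lemma IsEdge.eq_or_eq_of_ends {g : Cell} (hg : g.IsEdge) (hu : u.IsVertex) (hv : v.IsVertex)
    (hug : u ≤ g) (hvg : v ≤ g) (huv : u ≠ v) :
    (∃ a b, g = ⟨2 * a + 1, 2 * b⟩ ∧ (u = ⟨2 * a, 2 * b⟩ ∧ v = ⟨2 * (a + 1), 2 * b⟩ ∨
      v = ⟨2 * a, 2 * b⟩ ∧ u = ⟨2 * (a + 1), 2 * b⟩)) ∨
    ∃ a b, g = ⟨2 * a, 2 * b + 1⟩ ∧ (u = ⟨2 * a, 2 * b⟩ ∧ v = ⟨2 * a, 2 * (b + 1)⟩ ∨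
      v = ⟨2 * a, 2 * b⟩ ∧ u = ⟨2 * a, 2 * (b + 1)⟩) := by
  simp only [IsEdge, IsVertex, le_def, Incident, ne_eq, Cell.ext_iff] at *
  rcases hg with hg | hg
  · exact .inr ⟨g.x / 2, g.y / 2, by omega⟩
  · exact .inl ⟨g.x / 2, g.y / 2, by omega⟩

lemma exists_potential {c : Cell → ZMod 2} (hc : ∀ q, q.IsSquare → curl c q = 0) :
    ∃ φ : Cell → ZMod 2, ∀ ⦃g u v⦄, g.IsEdge → u.IsVertex → v.IsVertex → u ≤ g → v ≤ g → u ≠ v →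
      φ u + φ v = c g := by
  obtain ⟨f, fx, fy⟩ := exists_int_potential (fun x y => c ⟨2 * x + 1, 2 * y⟩)
    (fun x y => c ⟨2 * x, 2 * y + 1⟩) fun x y => by
      have := hc ⟨2 * x + 1, 2 * y + 1⟩ (by simp only [IsSquare]; omega)
      simp only [curl, add_sub_cancel_right] at this
      grind [CharTwo.add_eq_zero]
  refine ⟨fun u => f (u.x / 2) (u.y / 2), fun g u v hg hu hv hug hvg huv => ?_⟩
  rcases hg.eq_or_eq_of_ends hu hv hug hvg huv with
    ⟨a, b, rfl, ⟨rfl, rfl⟩ | ⟨rfl, rfl⟩⟩ | ⟨a, b, rfl, ⟨rfl, rfl⟩ | ⟨rfl, rfl⟩⟩ <;>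
    simp only [Int.mul_ediv_cancel_left, ne_eq, OfNat.ofNat_ne_zero, not_false_eq_true, fx, fy]
  all_goals grind

/-- A discrete Jordan lemma: if the two sides of `e` can be joined by a dual path avoiding `K`, then
that path and `e` form a loop separating the two ends of `e`. -/
lemma not_edgeGraph_reachable_sdiff_singleton (hset : IsBetween s e t) (he : e ∈ K)
    (h : (dualGraph Kᶜ).Reachable s t) (hu : u.IsVertex) (hv : v.IsVertex) (hue : u ≤ e)
    (hve : v ≤ e) (huv : u ≠ v) : ¬ (edgeGraph (K \ {e})).Reachable u v := by
  obtain ⟨c, hcK, hc⟩ := exists_cochain_of_dualGraph_reachable h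
  obtain ⟨φ, hφ⟩ := exists_potential (c := c + indicator e) fun q hq => by
    rw [curl_add, hc q hq, curl_indicator hset hq, CharTwo.add_self_eq_zero]
  have hφe : φ u ≠ φ v := by
    rw [Ne, ← CharTwo.add_eq_zero, hφ hset.isEdge hu hv hue hve huv]
    simp [hcK e he, indicator]
  have hφg : ∀ {a b}, (edgeGraph (K \ {e})).Adj a b → φ a = φ b := by
    intro a b hab
    obtain ⟨hne, g, ⟨hg, hge⟩, hE, ha, hb, hag, hbg⟩ := edgeGraph_adj.1 hab
    have hge : g ≠ e := hge
    rw [← CharTwo.add_eq_zero, hφ hE ha hb hag hbg hne]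
    simp [hcK g hg, indicator, hge]
  rintro ⟨p⟩
  refine hφe ?_
  clear * - p hφg
  induction p with
  | nil => rfl
  | cons hab _ ih => exact (hφg hab).trans ih

end Cell

/-! ### Elementary collapses -/

namespace Cell

variable {ρ : Push} {A B K K' S S' : Set Cell} {s e t u v w : Cell}

/-- The cell `t` is a free face of `s` in `K`: the only cell of `K` properly containing `t` in its
closure is `s`. -/
def FreePair (K : Set Cell) (s t : Cell) : Prop := s ∈ K ∧ t < s ∧ ∀ r ∈ K, t < r → r = s

/-- An elementary collapse: `K'` arises from `K` by removing a free face and its unique coface. -/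
def Collapse (K K' : Set Cell) : Prop := ∃ s t, FreePair K s t ∧ K' = K \ {s, t}

lemma FreePair.isLowerSet_sdiff (h : FreePair K s t) (hK : IsLowerSet K) :
    IsLowerSet (K \ {s, t}) := by
  rintro b a hab ⟨hb, hbst⟩
  refine ⟨hK hab hb, ?_⟩
  rintro (rfl | rfl)
  · exact hbst (.inl (h.2.2 b hb (h.2.1.trans_le hab)))
  · rcases hab.eq_or_lt with rfl | hlt
    · exact hbst (.inr rfl)
    · exact hbst (.inl (h.2.2 b hb hlt))

lemma Collapse.isLowerSet (h : Collapse K K') (hK : IsLowerSet K) : IsLowerSet K' := by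
  obtain ⟨s, t, hst, rfl⟩ := h
  exact hst.isLowerSet_sdiff hK

lemma Collapse.subset (h : Collapse K K') : K' ⊆ K := by
  obtain ⟨s, t, -, rfl⟩ := h
  exact sdiff_subset

lemma subset_of_collapses (h : Relation.ReflTransGen Collapse K K') : K' ⊆ K := by
  induction h with
  | refl => exact Subset.rfl
  | tail _ h ih => exact h.subset.trans ih

lemma IsSquare.not_isEdge (hs : s.IsSquare) : ¬ s.IsEdge := by
  unfold IsSquare at hs; unfold IsEdge; omega

lemma IsVertex.not_isEdge (hs : s.IsVertex) : ¬ s.IsEdge := by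
  unfold IsVertex at hs; unfold IsEdge; omega

lemma IsVertex.not_isSquare (hs : s.IsVertex) : ¬ s.IsSquare := by
  unfold IsVertex at hs; unfold IsSquare; omega

lemma isVertex_or_isEdge_or_isSquare (s : Cell) : s.IsVertex ∨ s.IsEdge ∨ s.IsSquare := by
  unfold IsVertex IsEdge IsSquare; omega

lemma isEdge_or_isSquare_of_lt (hst : s < t) : t.IsEdge ∨ t.IsSquare := by
  have hle := hst.le
  have hne := hst.ne
  simp only [le_def, Incident, ne_eq, Cell.ext_iff, IsEdge, IsSquare] at *
  omega

lemma IsEdge.exists_other_end (he : e.IsEdge) (hv : v.IsVertex) (hve : v ≤ e) :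
    ∃ u, u.IsVertex ∧ u ≤ e ∧ u ≠ v := by
  refine ⟨⟨2 * e.x - v.x, 2 * e.y - v.y⟩, ?_⟩
  simp only [IsEdge, IsVertex, le_def, Incident, ne_eq, Cell.ext_iff] at *
  omega

lemma IsEdge.eq_or_eq_or_eq (he : e.IsEdge) (hu : u.IsVertex) (hv : v.IsVertex) (hw : w.IsVertex)
    (hue : u ≤ e) (hve : v ≤ e) (hwe : w ≤ e) : u = v ∨ v = w ∨ u = w := by
  simp only [IsEdge, IsVertex, le_def, Incident, Cell.ext_iff] at *
  omega

lemma edgeGraph_mono (h : ∀ e ∈ S, e.IsEdge → e ∈ S') : edgeGraph S ≤ edgeGraph S' := by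
  intro u v huv
  obtain ⟨hne, e, he, hE, huv⟩ := edgeGraph_adj.1 huv
  exact edgeGraph_adj.2 ⟨hne, e, h e he hE, hE, huv⟩

lemma edgeGraph_adj_sdiff_singleton (h : (edgeGraph S).Adj s t) (hs : s ≠ v) (ht : t ≠ v)
    (hv : v.IsVertex) (hve : v ≤ e) : (edgeGraph (S \ {e})).Adj s t := by
  obtain ⟨hne, f, hf, hE, hs', ht', hsf, htf⟩ := edgeGraph_adj.1 h
  refine edgeGraph_adj.2 ⟨hne, f, ⟨hf, ?_⟩, hE, hs', ht', hsf, htf⟩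
  rintro rfl
  rcases hE.eq_or_eq_or_eq hs' ht' hv hsf htf hve with h | h | h
  exacts [hne h, ht h, hs h]

/-- The detour runs along the other three sides of `s`. -/
lemma edgeGraph_reachable_sdiff_pair (hset : IsBetween s e t) (hK : IsLowerSet K) (hs : s ∈ K)
    (hu : u.IsVertex) (hv : v.IsVertex) (hue : u ≤ e) (hve : v ≤ e) (huv : u ≠ v) :
    (edgeGraph (K \ {s, e})).Reachable u v := by
  have side : ∀ f p q, f < s → f ≠ e → f.IsEdge → p.IsVertex → q.IsVertex → p ≤ f → q ≤ f →
      (edgeGraph (K \ {s, e})).Reachable p q := fun f p q hfs hfe =>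
    edgeGraph_reachable_of_isEdge ⟨hK hfs.le hs, fun h => h.elim hfs.ne hfe⟩
  unfold IsBetween at hset
  rcases hset with hset | hset
  · refine (side ⟨s.x, u.y⟩ u ⟨2 * s.x - e.x, u.y⟩ ?_ ?_ ?_ hu ?_ ?_ ?_).trans
      ((side ⟨2 * s.x - e.x, s.y⟩ _ ⟨2 * s.x - e.x, v.y⟩ ?_ ?_ ?_ ?_ ?_ ?_ ?_).trans
      (side ⟨s.x, v.y⟩ _ v ?_ ?_ ?_ ?_ hv ?_ ?_)) <;>
    simp only [IsVertex, IsEdge, lt_iff_le_and_ne, le_def, Incident, ne_eq, Cell.ext_iff,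
      true_and, and_true, true_or] at * <;> omega
  · refine (side ⟨u.x, s.y⟩ u ⟨u.x, 2 * s.y - e.y⟩ ?_ ?_ ?_ hu ?_ ?_ ?_).trans
      ((side ⟨s.x, 2 * s.y - e.y⟩ _ ⟨v.x, 2 * s.y - e.y⟩ ?_ ?_ ?_ ?_ ?_ ?_ ?_).trans
      (side ⟨v.x, s.y⟩ _ v ?_ ?_ ?_ ?_ hv ?_ ?_)) <;>
    simp only [IsVertex, IsEdge, lt_iff_le_and_ne, le_def, Incident, ne_eq, Cell.ext_iff,
      true_and, and_true, true_or] at * <;> omega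

end Cell

/-- A point of `M` farthest from `L` is avoided by geodesics to `L` from all other points. -/
lemma exists_farthest {α : Type*} {G : SimpleGraph α} {M L : Set α} (hM : M.Finite)
    (hne : M.Nonempty) (hML : Disjoint M L) (hadj : ∀ x ∈ M, ∀ y, G.Adj x y → y ∈ M ∪ L)
    (hreach : ∀ x ∈ M, ∃ p ∈ L, G.Reachable x p) :
    ∃ v ∈ M, (∃ w, G.Adj v w) ∧ ∀ x ∈ M ∪ L, x ≠ v →
      ∃ p ∈ L, Relation.ReflTransGen (fun y z => G.Adj y z ∧ y ∉ L ∧ y ≠ v ∧ z ≠ v) x p := by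
  let D : α → ℕ := fun x => sInf {n | ∃ p ∈ L, ∃ w : G.Walk x p, w.length = n}
  have closer : ∀ x ∈ M, ∃ y, G.Adj x y ∧ D y < D x := by
    intro x hx
    obtain ⟨p, hp, ⟨w₀⟩⟩ := hreach x hx
    obtain ⟨q, hq, w, hw⟩ := Nat.sInf_mem
      (s := {n | ∃ p ∈ L, ∃ w : G.Walk x p, w.length = n}) ⟨_, p, hp, w₀, rfl⟩
    cases w with
    | nil => exact (hML.notMem_of_mem_left hx hq).elim
    | @cons _ y _ hxy w =>
      refine ⟨y, hxy, ?_⟩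
      have : D y ≤ w.length := Nat.sInf_le ⟨q, hq, w, rfl⟩
      have : w.length + 1 = D x := hw
      omega
  obtain ⟨v, hv, hmax⟩ := Set.exists_max_image M D hM hne
  refine ⟨v, hv, (closer v hv).imp fun _ h => h.1, fun x hx hxv => ?_⟩
  induction hn : D x using Nat.strong_induction_on generalizing x with
  | _ n ih =>
    rcases hx with hx | hx
    · obtain ⟨y, hxy, hlt⟩ := closer x hx
      have hyv : y ≠ v := by
        rintro rfl
        exact (hmax x hx).not_gt hlt
      obtain ⟨p, hp, hyp⟩ := ih (D y) (hn ▸ hlt) y (hadj x hx y hxy) hyv rfl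
      exact ⟨p, hp, .head ⟨hxy, hML.notMem_of_mem_left hx, hxv, hyv⟩ hyp⟩
    · exact ⟨x, hx, .refl⟩

namespace Cell

variable {ρ : Push} {A B K S S' : Set Cell} {e p q r s s' t t' u v w : Cell}

/-- The component of `s` in `S` and the component of `s'` in `S'` have a common face that is not a
vertex: this is the combinatorial form of sharing a boundary edge. -/
def EdgeTouch (S S' : Set Cell) (s s' : Cell) : Prop :=
  ∃ v t t', ¬ v.IsVertex ∧ v ≤ t ∧ v ≤ t' ∧ (incidenceGraph S).Reachable s t ∧
    (incidenceGraph S').Reachable s' t'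

lemma EdgeTouch.of_reachable (hr : (incidenceGraph S).Reachable r s) (h : EdgeTouch S S' s s') :
    EdgeTouch S S' r s' := by
  obtain ⟨v, t, t', hv, ht, ht', hs, hs'⟩ := h
  exact ⟨v, t, t', hv, ht, ht', hr.trans hs, hs'⟩

/-- Every component of `S` meets exactly one component of `S'` along an edge. Existence is only
required in the weaker form of an arbitrary common face. -/
structure UniqueNeighbor (S S' : Set Cell) : Prop where
  exists_common_face : ∀ ⦃s⦄, s ∈ S →
    ∃ v t, ∃ t' ∈ S', v ≤ t ∧ v ≤ t' ∧ (incidenceGraph S).Reachable s t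
  reachable : ∀ ⦃s t u⦄, s ∈ S → t ∈ S' → u ∈ S' → EdgeTouch S S' s t → EdgeTouch S S' s u →
    (incidenceGraph S').Reachable t u

/-- Two closed subcomplexes of the grid whose boundaries have no common edge. -/
structure TransversePair (ρ : Push) (A B : Set Cell) : Prop where
  isLowerSet_left : IsLowerSet A
  isLowerSet_right : IsLowerSet B
  invariant_left : ρ.Invariant A
  invariant_right : ρ.Invariant B
  agree : ∀ ⦃s e t⦄, IsBetween s e t → (s ∈ A ↔ t ∈ A) ∨ (s ∈ B ↔ t ∈ B)

protected lemma TransversePair.symm (h : TransversePair ρ A B) : TransversePair ρ B A where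
  isLowerSet_left := h.isLowerSet_right
  isLowerSet_right := h.isLowerSet_left
  invariant_left := h.invariant_right
  invariant_right := h.invariant_left
  agree _ _ _ hset := (h.agree hset).symm

/-- Combinatorial form of the one-sided regularity hypothesis: every component of `A \ B` has a
unique neighbour in `A ∩ B` and in `Aᶜ ∩ Bᶜ`. -/
structure RegularPair (ρ : Push) (A B : Set Cell) : Prop extends TransversePair ρ A B where
  unique_inter : UniqueNeighbor (A \ B) (A ∩ B)
  unique_compl : UniqueNeighbor (A \ B) (Aᶜ ∩ Bᶜ)

/-- The invariant of the collapsing process from `A` to `A ∩ B`. Every square outside `B` removed so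
far is connected, across removed edges, to the neighbour of its component in `Aᶜ ∩ Bᶜ`, and every
remaining vertex is connected to `A ∩ B`. -/
structure Intermediate (A B K : Set Cell) : Prop where
  subset : K ⊆ A
  superset : A ∩ B ⊆ K
  isLowerSet : IsLowerSet K
  dual : ∀ ⦃s⦄, s ∈ A \ B → s.IsSquare → s ∉ K → ∃ t ∈ Aᶜ ∩ Bᶜ, t.IsSquare ∧
    (dualGraph Kᶜ).Reachable s t ∧ EdgeTouch (A \ B) (Aᶜ ∩ Bᶜ) s t
  reachable : ∀ ⦃v⦄, v ∈ K → v.IsVertex → ∃ p ∈ A ∩ B, p.IsVertex ∧ (edgeGraph K).Reachable v p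

namespace RegularPair

variable (h : RegularPair ρ A B)
include h

lemma ordConnected_sdiff : (A \ B).OrdConnected :=
  h.isLowerSet_left.ordConnected.inter h.isLowerSet_right.compl.ordConnected

lemma ordConnected_compl : (Aᶜ ∩ Bᶜ).OrdConnected :=
  (h.isLowerSet_left.compl.inter h.isLowerSet_right.compl).ordConnected

lemma invariant_sdiff : ρ.Invariant (A \ B) := h.invariant_left.inter h.invariant_right.compl

lemma intermediate_self : Intermediate A B A where
  subset := subset_rfl
  superset := inter_subset_left
  isLowerSet := h.isLowerSet_left
  dual s hs _ hsA := (hsA hs.1).elim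
  reachable v hv hV := by
    by_cases hvB : v ∈ B
    · exact ⟨v, ⟨hv, hvB⟩, hV, .rfl⟩
    obtain ⟨w, t, t', ht', hwt, hwt', hvt⟩ := h.unique_inter.exists_common_face ⟨hv, hvB⟩
    obtain ⟨p, hp, hpt'⟩ := exists_isVertex_le t'
    have ht := mem_of_incidenceGraph_reachable hvt ⟨hv, hvB⟩
    have hw := h.isLowerSet_left hwt ht.1
    have hvt' : (incidenceGraph A).Reachable v t' :=
      (hvt.mono (incidenceGraph_mono sdiff_subset)).trans
        ((incidenceGraph_reachable_of_le hw ht.1 hwt).symm.trans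
          (incidenceGraph_reachable_of_le hw ht'.1 hwt'))
    exact ⟨p, ⟨h.isLowerSet_left hpt' ht'.1, h.isLowerSet_right hpt' ht'.2⟩, hp,
      edgeGraph_reachable_of_incidenceGraph_reachable h.isLowerSet_left hv hvt' hV le_rfl hp hpt'⟩

lemma edgeTouch_inter (hs : s ∈ A \ B) (ht : t ∈ A ∩ B) (hvs : v ≤ s) (hvt : v ≤ t) :
    EdgeTouch (A \ B) (A ∩ B) s t := by
  obtain ⟨s', e, t', hset, -, -, -, hss', htt'⟩ :=
    h.invariant_sdiff.exists_isBetween_of_common_face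
      (h.invariant_left.inter h.invariant_right)
      (disjoint_sdiff_left.mono_right inter_subset_right)
      (fun p e q e' r hpq hqr hp hr => by
        have := h.agree hpq; have := h.agree hqr; simp only [mem_inter_iff, mem_sdiff] at *; tauto)
      hvs hvt hs ht
  exact ⟨e, s', t', fun hV => hV.not_isEdge hset.isEdge, hset.lt_left.le, hset.lt_right.le,
    hss', htt'⟩

lemma exists_isBetween_compl (hs : s ∈ A \ B) :
    ∃ s' e t', IsBetween s' e t' ∧ t' ∈ Aᶜ ∩ Bᶜ ∧ s' ∈ A \ B ∧
      (incidenceGraph (A \ B)).Reachable s s' := by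
  obtain ⟨v, t, t', ht', hvt, hvt', hst⟩ := h.unique_compl.exists_common_face hs
  obtain ⟨s', e, t'', hset, -, hs', ht'', hts', -⟩ :=
    h.invariant_sdiff.exists_isBetween_of_common_face
      (h.invariant_left.compl.inter h.invariant_right.compl)
      (disjoint_compl_right.mono sdiff_subset inter_subset_left)
      (fun p e q e' r hpq hqr hp hr => by
        have := h.agree hpq; have := h.agree hqr
        simp only [mem_inter_iff, mem_sdiff, mem_compl_iff] at *; tauto)
      hvt hvt' (mem_of_incidenceGraph_reachable hst hs) ht'
  exact ⟨s', e, t'', hset, ht'', hs', hst.trans hts'⟩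

/-- Follow a dual path from `s` to `Aᶜ ∩ Bᶜ` until it leaves `K`. -/
lemma exists_isBetween_of_isSquare (hKA : K ⊆ A) (hs : s ∈ K \ B) (hS : s.IsSquare) :
    ∃ s' e t', IsBetween s' e t' ∧ s' ∈ K ∧ e ∉ B ∧ t' ∉ K := by
  obtain ⟨s', e, t', hset, ht', hs', hss'⟩ := h.exists_isBetween_compl ⟨hKA hs.1, hs.2⟩
  have hpath : (dualGraph Bᶜ).Reachable s s' := by
    have := h.invariant_sdiff.dualGraph_reachable h.ordConnected_sdiff hss'
    rw [Push.square_of_isSquare hS, Push.square_of_isSquare hset.isSquare] at this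
    exact this.mono (dualGraph_mono fun _ => And.right)
  have hstep : (dualGraph Bᶜ).Reachable s' t' :=
    dualGraph_reachable_of_isBetween hset
      (h.invariant_right.compl.mem_of_isBetween hset hs'.2 ht'.2)
  obtain ⟨path⟩ := hpath.trans hstep
  obtain ⟨d, -, hd, hd'⟩ := path.exists_boundary_dart K hs.1 fun ht'K => ht'.1 (hKA ht'K)
  obtain ⟨-, f, hf, hdf⟩ := dualGraph_adj.1 d.adj
  exact ⟨d.fst, f, d.snd, hdf, hd, hf, hd'⟩

end RegularPair

/-- The vertices `u` and `p` are joined by a path of edges in `K` whose vertices, except possibly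
`p`, lie outside `B`. -/
def PathOutside (B K : Set Cell) : Cell → Cell → Prop :=
  Relation.ReflTransGen fun x y => (edgeGraph K).Adj x y ∧ x ∉ B

lemma PathOutside.mono (hS : ∀ e ∈ S, e.IsEdge → e ∈ S') (h : PathOutside B S u p) :
    PathOutside B S' u p :=
  Relation.ReflTransGen.mono (fun _ _ h => ⟨edgeGraph_mono hS h.1, h.2⟩) _ _ h

lemma PathOutside.reachable (h : PathOutside B S u p) : (edgeGraph S).Reachable u p :=
  (SimpleGraph.reachable_iff_reflTransGen _ _).2
    (Relation.ReflTransGen.mono (fun _ _ => And.left) _ _ h)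

namespace Intermediate

variable (hI : Intermediate A B K)
include hI

lemma exists_dual_of_isBetween (hst : IsBetween s e t) (he : e ∈ A \ B) (hB : IsLowerSet B)
    (hs : s ∉ K) : ∃ r ∈ Aᶜ ∩ Bᶜ, r.IsSquare ∧ (dualGraph Kᶜ).Reachable s r ∧
      EdgeTouch (A \ B) (Aᶜ ∩ Bᶜ) e r := by
  have hsB : s ∉ B := fun hsB => he.2 (hB hst.lt_left.le hsB)
  by_cases hsA : s ∈ A
  · obtain ⟨r, hr, hR, hsr, htouch⟩ := hI.dual ⟨hsA, hsB⟩ hst.isSquare hs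
    exact ⟨r, hr, hR, hsr,
      htouch.of_reachable (incidenceGraph_reachable_of_le he ⟨hsA, hsB⟩ hst.lt_left.le)⟩
  · exact ⟨s, ⟨hsA, hsB⟩, hst.isSquare, .rfl, e, e, s, fun hV => hV.not_isEdge hst.isEdge,
      le_rfl, hst.lt_left.le, .rfl, .rfl⟩

lemma sdiff_pair (hst : FreePair K s t) (ht : t ∉ B) (hB : IsLowerSet B)
    (hdual : ∀ ⦃r⦄, r ∈ A \ B → r.IsSquare → r ∈ ({s, t} : Set Cell) → ∃ q ∈ Aᶜ ∩ Bᶜ, q.IsSquare ∧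
      (dualGraph (K \ {s, t})ᶜ).Reachable r q ∧ EdgeTouch (A \ B) (Aᶜ ∩ Bᶜ) r q)
    (hreach : ∀ ⦃v⦄, v ∈ K \ {s, t} → v.IsVertex →
      ∃ p ∈ A ∩ B, p.IsVertex ∧ (edgeGraph (K \ {s, t})).Reachable v p) :
    Intermediate A B (K \ {s, t}) where
  subset := sdiff_subset.trans hI.subset
  superset p hp := ⟨hI.superset hp, by
    rintro (rfl | rfl)
    exacts [ht (hB hst.2.1.le hp.2), ht hp.2]⟩
  isLowerSet := hst.isLowerSet_sdiff hI.isLowerSet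
  dual r hr hR hrK := by
    by_cases hrst : r ∈ ({s, t} : Set Cell)
    · exact hdual hr hR hrst
    · obtain ⟨q, hq, hQ, hrq, htouch⟩ := hI.dual hr hR fun hrK' => hrK ⟨hrK', hrst⟩
      exact ⟨q, hq, hQ, hrq.mono (dualGraph_mono (compl_subset_compl.2 sdiff_subset)), htouch⟩
  reachable := hreach

lemma sdiff_isSquare (hB : IsLowerSet B) (hset : IsBetween s e t) (hs : s ∈ K) (he : e ∉ B)
    (ht : t ∉ K) : FreePair K s e ∧ Intermediate A B (K \ {s, e}) := by
  have heK := hI.isLowerSet hset.lt_left.le hs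
  have hfree : FreePair K s e :=
    ⟨hs, hset.lt_left, fun r hr her => (hset.eq_or_eq_of_lt her).resolve_right (ht <| · ▸ hr)⟩
  refine ⟨hfree, hI.sdiff_pair hfree he hB ?_ ?_⟩
  · rintro r hr hR (rfl | rfl)
    · have heAB : e ∈ A \ B := ⟨hI.subset heK, he⟩
      obtain ⟨q, hq, hQ, htq, htouch⟩ := hI.exists_dual_of_isBetween hset.symm heAB hB ht
      exact ⟨q, hq, hQ, (dualGraph_reachable_of_isBetween hset fun h => h.2 (.inr rfl)).trans
        (htq.mono (dualGraph_mono (compl_subset_compl.2 sdiff_subset))),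
        htouch.of_reachable (incidenceGraph_reachable_of_le heAB hr hset.lt_left.le).symm⟩
    · exact (hR.not_isEdge hset.isEdge).elim
  · intro v hv hV
    obtain ⟨p, hp, hP, hvp⟩ := hI.reachable hv.1 hV
    refine ⟨p, hp, hP, ?_⟩
    rw [SimpleGraph.reachable_iff_reflTransGen] at hvp
    clear hp hP
    induction hvp with
    | refl => rfl
    | tail _ hadj ih =>
      obtain ⟨hne, f, hf, hF, hu, hw, huf, hwf⟩ := edgeGraph_adj.1 hadj
      refine ih.trans ?_
      rcases eq_or_ne f e with rfl | hfe
      · exact edgeGraph_reachable_sdiff_pair hset hI.isLowerSet hs hu hw huf hwf hne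
      · refine edgeGraph_reachable_of_isEdge ⟨hf, ?_⟩ hF hu hw huf hwf
        rintro (rfl | rfl)
        exacts [hset.isSquare.not_isEdge hF, hfe rfl]

variable (h : RegularPair ρ A B) (hsq : ∀ s ∈ K \ B, ¬ s.IsSquare)
include h hsq

/-- Both sides of `e` are connected, across removed edges, to the same component of `Aᶜ ∩ Bᶜ`, so
that `e` is a bridge by the Jordan lemma. -/
lemma not_edgeGraph_reachable (heK : e ∈ K \ B) (he : e.IsEdge) (hu : u.IsVertex)
    (hv : v.IsVertex) (hue : u ≤ e) (hve : v ≤ e) (huv : u ≠ v) :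
    ¬ (edgeGraph (K \ {e})).Reachable u v := by
  have heAB : e ∈ A \ B := ⟨hI.subset heK.1, heK.2⟩
  obtain ⟨s, t, hset⟩ := he.exists_isBetween
  have notMem : ∀ {s t}, IsBetween s e t → s ∉ K := fun hset hs =>
    hsq _ ⟨hs, fun hsB => heK.2 (h.isLowerSet_right hset.lt_left.le hsB)⟩ hset.isSquare
  obtain ⟨s', hs', hS, hss', touch_s⟩ :=
    hI.exists_dual_of_isBetween hset heAB h.isLowerSet_right (notMem hset)
  obtain ⟨t', ht', hT, htt', touch_t⟩ :=
    hI.exists_dual_of_isBetween hset.symm heAB h.isLowerSet_right (notMem hset.symm)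
  have hst' : (dualGraph (Aᶜ ∩ Bᶜ)).Reachable s' t' := by
    have := (h.invariant_left.compl.inter h.invariant_right.compl).dualGraph_reachable
      h.ordConnected_compl (h.unique_compl.reachable heAB hs' ht' touch_s touch_t)
    rwa [Push.square_of_isSquare hS, Push.square_of_isSquare hT] at this
  exact not_edgeGraph_reachable_sdiff_singleton hset heK.1
    ((hss'.trans (hst'.mono (dualGraph_mono fun _ hr hrK => hr.1 (hI.subset hrK)))).trans
      htt'.symm) hu hv hue hve huv

omit hsq in
lemma edgeTouch_of_pathOutside (heK : e ∈ K \ B) (hue : u ≤ e) (hpB : p ∈ B)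
    (hup : PathOutside B K u p) :
    p ∈ A ∩ B ∧ EdgeTouch (A \ B) (A ∩ B) e p := by
  have heAB : e ∈ A \ B := ⟨hI.subset heK.1, heK.2⟩
  suffices H : ∃ f ∈ A \ B, p ≤ f ∧ (incidenceGraph (A \ B)).Reachable e f by
    obtain ⟨f, hf, hpf, hef⟩ := H
    have hp : p ∈ A ∩ B := ⟨h.isLowerSet_left hpf hf.1, hpB⟩
    exact ⟨hp, (h.edgeTouch_inter hf hp hpf le_rfl).of_reachable hef⟩
  clear hpB
  induction hup with
  | refl => exact ⟨e, heAB, hue, .rfl⟩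
  | @tail x y _ hxy ih =>
    obtain ⟨f, hf, hxf, hef⟩ := ih
    obtain ⟨-, g, hg, -, -, -, hxg, hyg⟩ := edgeGraph_adj.1 hxy.1
    have hxAB : x ∈ A \ B := ⟨h.isLowerSet_left hxf hf.1, hxy.2⟩
    have hgAB : g ∈ A \ B := ⟨hI.subset hg, fun hgB => hxy.2 (h.isLowerSet_right hxg hgB)⟩
    exact ⟨g, hgAB, hyg, hef.trans ((incidenceGraph_reachable_of_le hxAB hf hxf).symm.trans
      (incidenceGraph_reachable_of_le hxAB hgAB hxg))⟩

/-- Otherwise the ends of `e` could be joined through the unique neighbour in `A ∩ B`. -/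
lemma eq_of_pathOutside (heK : e ∈ K \ B) (he : e.IsEdge) (hu : u.IsVertex) (hv : v.IsVertex)
    (hue : u ≤ e) (hve : v ≤ e) (hp : p ∈ B) (hq : q ∈ B) (hP : p.IsVertex) (hQ : q.IsVertex)
    (hup : PathOutside B (K \ {e}) u p) (hvq : PathOutside B (K \ {e}) v q) : u = v := by
  obtain ⟨hpAB, touch_p⟩ := hI.edgeTouch_of_pathOutside h heK hue hp (hup.mono fun _ hf _ => hf.1)
  obtain ⟨hqAB, touch_q⟩ := hI.edgeTouch_of_pathOutside h heK hve hq (hvq.mono fun _ hf _ => hf.1)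
  have hpq := edgeGraph_reachable_of_incidenceGraph_reachable
    (h.isLowerSet_left.inter h.isLowerSet_right) hpAB
    (h.unique_inter.reachable ⟨hI.subset heK.1, heK.2⟩ hpAB hqAB touch_p touch_q) hP le_rfl hQ
    le_rfl
  by_contra huv
  refine hI.not_edgeGraph_reachable h hsq heK he hu hv hue hve huv
    ((hup.reachable.trans (hpq.mono (edgeGraph_mono fun r hr _ => ?_))).trans hvq.reachable.symm)
  exact ⟨hI.superset hr, fun hre => heK.2 (hre ▸ hr.2)⟩

omit h hsq in
/-- The vertex `v` is chosen farthest from `B`. -/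
lemma exists_vertex_pathOutside (hK : K.Finite) (hne : ∃ v ∈ K \ B, v.IsVertex) :
    ∃ v ∈ K \ B, v.IsVertex ∧ (∃ w, (edgeGraph K).Adj v w) ∧ ∀ x ∈ K, x.IsVertex → x ≠ v →
      ∃ p ∈ A ∩ B, p.IsVertex ∧ ∀ e, v ≤ e → PathOutside B (K \ {e}) x p := by
  have split : ∀ {x}, x ∈ K → x.IsVertex →
      x ∈ {v ∈ K \ B | v.IsVertex} ∪ {v ∈ K ∩ B | v.IsVertex} := fun {x} hx hX => by
    by_cases hxB : x ∈ B
    exacts [.inr ⟨⟨hx, hxB⟩, hX⟩, .inl ⟨⟨hx, hxB⟩, hX⟩]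
  obtain ⟨v, hv, hvw, hpath⟩ := exists_farthest (G := edgeGraph K)
    (M := {v ∈ K \ B | v.IsVertex}) (L := {v ∈ K ∩ B | v.IsVertex})
    (hK.subset fun v hv => hv.1.1) hne (disjoint_left.2 fun v hv hv' => hv.1.2 hv'.1.2)
    (fun x _ y hxy => by
      obtain ⟨-, e, he, -, -, hY, -, hye⟩ := edgeGraph_adj.1 hxy
      exact split (hI.isLowerSet hye he) hY)
    (fun x hx => by
      obtain ⟨p, hp, hP, hxp⟩ := hI.reachable hx.1.1 hx.2
      exact ⟨p, ⟨⟨hI.superset hp, hp.2⟩, hP⟩, hxp⟩)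
  refine ⟨v, hv.1, hv.2, hvw, fun x hx hX hxv => ?_⟩
  obtain ⟨p, hp, hxp⟩ := hpath x (split hx hX) hxv
  refine ⟨p, ⟨hI.subset hp.1.1, hp.1.2⟩, hp.2, fun e hve => Relation.ReflTransGen.mono ?_ _ _ hxp⟩
  rintro y z ⟨hyz, hyL, hyv, hzv⟩
  obtain ⟨-, e, he, -, hY, -, hye, -⟩ := edgeGraph_adj.1 hyz
  exact ⟨edgeGraph_adj_sdiff_singleton hyz hyv hzv hv.2 hve,
    fun hyB => hyL ⟨⟨hI.isLowerSet hye he, hyB⟩, hY⟩⟩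

lemma exists_freePair_of_isVertex (hK : K.Finite) (hne : ∃ v ∈ K \ B, v.IsVertex) :
    ∃ f v, FreePair K f v ∧ Intermediate A B (K \ {f, v}) := by
  obtain ⟨v, hv, hV, ⟨w, hvw⟩, hpath⟩ := hI.exists_vertex_pathOutside hK hne
  obtain ⟨hne, f, hf, hF, -, hW, hvf, hwf⟩ := edgeGraph_adj.1 hvw
  have notMem : ∀ r, v ≤ r → r ∉ B := fun r hvr hrB => hv.2 (h.isLowerSet_right hvr hrB)
  have hfree : FreePair K f v := by
    refine ⟨hf, lt_of_le_of_ne hvf fun hvf => (hvf ▸ hV).not_isEdge hF, fun r hr hvr => ?_⟩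
    have hR : r.IsEdge := (isEdge_or_isSquare_of_lt hvr).resolve_right
      (hsq r ⟨hr, notMem r hvr.le⟩)
    by_contra hrf
    obtain ⟨u, hU, hur, huv⟩ := hR.exists_other_end hV hvr.le
    obtain ⟨p, hp, hP, hup⟩ := hpath u (hI.isLowerSet hur hr) hU huv
    obtain ⟨q, hq, hQ, hwq⟩ := hpath w (hI.isLowerSet hwf hf) hW hne.symm
    have hvq : PathOutside B (K \ {r}) v q :=
      .head ⟨edgeGraph_adj.2 ⟨hne, f, ⟨hf, Ne.symm hrf⟩, hF, hV, hW, hvf, hwf⟩, hv.2⟩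
        (hwq r hvr.le)
    exact huv (hI.eq_of_pathOutside h hsq ⟨hr, notMem r hvr.le⟩ hR hU hV hur hvr.le hp.2 hq.2 hP
      hQ (hup r hvr.le) hvq)
  refine ⟨f, v, hfree, hI.sdiff_pair hfree hv.2 h.isLowerSet_right ?_ ?_⟩
  · rintro r - hR (rfl | rfl)
    exacts [(hR.not_isEdge hF).elim, (hV.not_isSquare hR).elim]
  · intro x hx hX
    obtain ⟨p, hp, hP, hxp⟩ := hpath x hx.1 hX fun hxv => hx.2 (.inr hxv)
    have hxp' := (hxp f hvf).mono (S' := K \ {f, v}) fun e he hE => ⟨he.1, by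
      rintro (rfl | rfl)
      exacts [he.2 rfl, hV.not_isEdge hE]⟩
    exact ⟨p, hp, hP, hxp'.reachable⟩

lemma not_isEdge_of_isVertex (hvert : ∀ v ∈ K \ B, ¬ v.IsVertex) (he : e ∈ K \ B) :
    ¬ e.IsEdge := by
  intro hE
  have mem : ∀ u, u ≤ e → u.IsVertex → u ∈ B := fun u hue hU => by_contra fun hu =>
    hvert u ⟨hI.isLowerSet hue he.1, hu⟩ hU
  obtain ⟨v, hV, hve⟩ := exists_isVertex_le e
  obtain ⟨u, hU, hue, huv⟩ := hE.exists_other_end hV hve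
  exact huv (hI.eq_of_pathOutside h hsq he hE hU hV hue hve (mem u hue hU) (mem v hve hV) hU hV
    .refl .refl)

omit hsq in
lemma exists_collapse (hK : K.Finite) (hne : (K \ B).Nonempty) :
    ∃ K', Collapse K K' ∧ K' ⊂ K ∧ Intermediate A B K' := by
  suffices H : ∃ s t, FreePair K s t ∧ Intermediate A B (K \ {s, t}) by
    obtain ⟨s, t, hst, hI'⟩ := H
    exact ⟨_, ⟨s, t, hst, rfl⟩,
      sdiff_subset.ssubset_of_mem_notMem hst.1 fun h => h.2 (.inl rfl), hI'⟩
  by_cases hsq : ∃ s ∈ K \ B, s.IsSquare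
  · obtain ⟨s, hs, hS⟩ := hsq
    obtain ⟨s', e, t', hset, hs', he, ht'⟩ := h.exists_isBetween_of_isSquare hI.subset hs hS
    exact ⟨s', e, hI.sdiff_isSquare h.isLowerSet_right hset hs' he ht'⟩
  push Not at hsq
  by_cases hvert : ∃ v ∈ K \ B, v.IsVertex
  · exact hI.exists_freePair_of_isVertex h hsq hK hvert
  push Not at hvert
  obtain ⟨e, he⟩ := hne
  rcases e.isVertex_or_isEdge_or_isSquare with hV | hE | hS
  · exact (hvert e he hV).elim
  · exact (hI.not_isEdge_of_isVertex h hsq hvert he hE).elim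
  · exact (hsq e he hS).elim

omit hsq in
lemma collapses (hK : K.Finite) : Relation.ReflTransGen Collapse K (A ∩ B) := by
  induction hn : K.ncard using Nat.strong_induction_on generalizing K with
  | _ n ih =>
    rcases (K \ B).eq_empty_or_nonempty with hempty | hne
    · rw [hI.superset.antisymm fun s hs => ⟨hI.subset hs, sdiff_eq_empty.1 hempty hs⟩]
    · obtain ⟨K', hcollapse, hlt, hI'⟩ := hI.exists_collapse h hK hne
      exact .head hcollapse (ih _ (hn ▸ ncard_lt_ncard hlt hK) hI' (hK.subset hlt.subset) rfl)

end Intermediate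

theorem RegularPair.collapses (h : RegularPair ρ A B) (hA : A.Finite) :
    Relation.ReflTransGen Collapse A (A ∩ B) :=
  h.intermediate_self.collapses h hA

end Cell

/-! ### Strong deformation retracts -/

namespace SDR

variable {X Y Z : Set Plane}

protected lemma refl (X : Set Plane) : SDR X X :=
  ⟨⟨Prod.fst, continuous_fst⟩, fun _ => rfl, fun x => x.2, fun _ _ _ => rfl⟩

lemma of_homotopyRel {f : C(X, X)}
    (H : ContinuousMap.HomotopyRel (.id X) f {x : X | (x : Plane) ∈ Y})
    (hf : ∀ x, (f x : Plane) ∈ Y) : SDR X Y :=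
  ⟨H.toContinuousMap.comp .prodSwap, H.apply_zero,
    fun x => mem_of_eq_of_mem (congr_arg Subtype.val (H.apply_one x)) (hf x),
    fun _ ha t => H.eq_fst t ha⟩

protected lemma trans (hYX : Y ⊆ X) (hZY : Z ⊆ Y) (hXY : SDR X Y) (hYZ : SDR Y Z) : SDR X Z := by
  obtain ⟨H, H₀, H₁, Hfix⟩ := hXY
  obtain ⟨J, J₀, J₁, Jfix⟩ := hYZ
  let ι : C(Y, X) := ⟨inclusion hYX, continuous_inclusion hYX⟩
  let r : C(X, Y) := ⟨fun x => ⟨H (x, 1), H₁ x⟩, by fun_prop⟩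
  let f : C(X, X) := ι.comp ((J.comp (.prodMk (.id Y) (.const Y 1))).comp r)
  let F : ContinuousMap.HomotopyRel (.id X) (ι.comp r) {x : X | (x : Plane) ∈ Z} :=
    { toContinuousMap := H.comp .prodSwap
      map_zero_left := H₀
      map_one_left := fun _ => rfl
      prop' := fun t x hx => Hfix x (hZY hx) t }
  have hr : ∀ x : X, (x : Plane) ∈ Z → (r x : Plane) = x := fun x hx =>
    congr_arg Subtype.val (Hfix x (hZY hx) 1)
  let G : ContinuousMap.HomotopyRel (ι.comp r) f {x : X | (x : Plane) ∈ Z} :=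
    { toContinuousMap := ι.comp (J.comp ((r.prodMap (.id unitInterval)).comp .prodSwap))
      map_zero_left := fun x => congr_arg ι (J₀ (r x))
      map_one_left := fun _ => rfl
      prop' := fun t x hx => congr_arg ι (Jfix (r x) ((hr x hx).symm ▸ hx) t) }
  exact of_homotopyRel (F.trans G) fun x => J₁ (r x)

lemma of_convex (hX : Convex ℝ X) {r : Plane → Plane} (hr : ContinuousOn r X)
    (hrX : MapsTo r X (X ∩ Y)) (hfix : ∀ x ∈ X ∩ Y, r x = x) : SDR X Y := by
  have hr' : Continuous fun p : X × unitInterval => r p.1 :=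
    hr.comp_continuous (by fun_prop) fun p => p.1.2
  refine ⟨⟨fun p => ⟨AffineMap.lineMap (p.1 : Plane) (r p.1) (p.2 : ℝ),
    hX.lineMap_mem p.1.2 (hrX p.1.2).1 p.2.2⟩, ?_⟩, fun x => ?_, fun x => ?_, fun x hx t => ?_⟩
  · refine .subtype_mk ?_ _
    simp only [AffineMap.lineMap_apply_module]
    exact .add (by fun_prop) ((continuous_subtype_val.comp continuous_snd).smul hr')
  · exact Subtype.ext (AffineMap.lineMap_apply_zero _ _)
  · simpa using (hrX x.2).2
  · exact Subtype.ext (by simp [hfix x ⟨x.2, hx⟩])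

lemma union (hX : IsClosed X) (hY : IsClosed Y) (h : SDR X (X ∩ Y)) : SDR (X ∪ Y) Y := by
  classical
  obtain ⟨H, H₀, H₁, Hfix⟩ := h
  let F : Plane × unitInterval → Plane := fun p =>
    if p.1 ∈ Y then p.1 else if hp : p.1 ∈ X then H (⟨p.1, hp⟩, p.2) else p.1
  have F_left : ∀ x t, x ∈ Y → F (x, t) = x := fun x t hx => if_pos hx
  have F_right : ∀ (x : X) t, F (x, t) = H (x, t) := fun x t => by
    by_cases hx : (x : Plane) ∈ Y
    · rw [F_left _ _ hx, Hfix x ⟨x.2, hx⟩]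
    · simp [F, hx]
  have hF : ContinuousOn F ((X ∪ Y) ×ˢ univ) := by
    rw [union_prod]
    refine .union_of_isClosed ?_ ?_ (hX.prod isClosed_univ) (hY.prod isClosed_univ)
    · rw [continuousOn_iff_continuous_domRestrict]
      refine (show Continuous fun p : (X ×ˢ univ : Set (Plane × unitInterval)) =>
        (H (⟨p.1.1, p.2.1⟩, p.1.2) : Plane) by fun_prop).congr fun p => ?_
      exact (F_right ⟨p.1.1, p.2.1⟩ p.1.2).symm
    · exact continuousOn_fst.congr fun p hp => F_left _ _ hp.1
  have hmem : ∀ x ∈ X ∪ Y, ∀ t, F (x, t) ∈ X ∪ Y := by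
    rintro x (hx | hx) t
    · exact .inl ((F_right ⟨x, hx⟩ t).symm ▸ (H _).2)
    · exact .inr ((F_left x t hx).symm ▸ hx)
  refine ⟨⟨fun p => ⟨F (p.1, p.2), hmem p.1 p.1.2 p.2⟩, .subtype_mk
    (hF.comp_continuous (by fun_prop) fun p => ⟨p.1.2, trivial⟩) _⟩, ?_, ?_, ?_⟩
  · rintro ⟨x, hx | hx⟩
    · exact Subtype.ext ((F_right ⟨x, hx⟩ 0).trans (congr_arg _ (H₀ ⟨x, hx⟩)))
    · exact Subtype.ext (F_left x 0 hx)
  · rintro ⟨x, hx | hx⟩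
    · exact mem_of_eq_of_mem (F_right ⟨x, hx⟩ 1) (H₁ ⟨x, hx⟩).2
    · exact mem_of_eq_of_mem (F_left x 1 hx) hx
  · exact fun x hx t => Subtype.ext (F_left x t hx)

/-- A piecewise linear retraction of the rectangle `[0, 1] × [-1, 1]` onto the union of its sides
`s = 0`, `w = -1` and `w = 1`. -/
def rectRetraction (z : ℝ × ℝ) : ℝ × ℝ :=
  (max 0 ((1 + z.1) * |z.2| - 1), max (-1) (min 1 ((1 + z.1) * z.2)))

lemma continuous_rectRetraction : Continuous rectRetraction := by
  unfold rectRetraction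
  fun_prop

lemma rectRetraction_eq_self {z : ℝ × ℝ} (hz : z ∈ Icc 0 1 ×ˢ Icc (-1) 1)
    (h : z.1 = 0 ∨ z.2 = -1 ∨ z.2 = 1) : rectRetraction z = z := by
  obtain ⟨s, w⟩ := z
  obtain ⟨⟨hs₀, hs₁⟩, hw₀, hw₁⟩ := hz
  have habs : |w| ≤ 1 := abs_le.2 ⟨hw₀, hw₁⟩
  simp only at hs₀ hs₁ hw₀ hw₁ h
  rcases h with rfl | rfl | rfl
  · simp [rectRetraction, hw₀, hw₁, habs]
  · simp [rectRetraction, hs₀]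
  · simp [rectRetraction, hs₀]

lemma rectRetraction_mem {z : ℝ × ℝ} (hz : z ∈ Icc 0 1 ×ˢ Icc (-1) 1) :
    rectRetraction z ∈ Icc 0 1 ×ˢ Icc (-1) 1 := by
  obtain ⟨s, w⟩ := z
  obtain ⟨⟨hs₀, hs₁⟩, hw₀, hw₁⟩ := hz
  simp only at hs₀ hs₁ hw₀ hw₁
  have habs : |w| ≤ 1 := abs_le.2 ⟨hw₀, hw₁⟩
  have hscaled : (1 + s) * |w| - 1 ≤ 1 := by nlinarith
  exact ⟨⟨le_max_left _ _, max_le zero_le_one hscaled⟩,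
    le_max_left _ _, max_le (by norm_num) (min_le_left _ _)⟩

lemma rectRetraction_side (z : ℝ × ℝ) : (rectRetraction z).1 = 0 ∨
    z.2 ≠ 0 ∧ ((rectRetraction z).2 = -1 ∨ (rectRetraction z).2 = 1) := by
  obtain ⟨s, w⟩ := z
  rcases le_total ((1 + s) * |w|) 1 with h | h
  · exact .inl (max_eq_left (by linarith))
  · refine .inr ⟨?_, ?_⟩
    · rintro rfl
      norm_num at h
    rcases abs_cases w with ⟨hw, -⟩ | ⟨hw, -⟩ <;> rw [hw] at h
    · exact .inr (by simp [rectRetraction, h])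
    · exact .inl (max_eq_left ((min_le_right _ _).trans (by linarith)))

section Rectangle

variable (i j : Fin 2) (a b c m d : ℝ)

/-- The rectangle with sides `x i = a`, `x i = b`, `x j = c` and `x j = d`, a segment if `c = d`. -/
def rectangle : Set Plane := {x | x i ∈ uIcc a b ∧ x j ∈ Icc c d}

/-- The coordinates in `[0, 1] × [-1, 1]` on the rectangle `[a, b] × [m - d, m + d]`. If
`d = 0` then the second coordinate vanishes, because `x / 0 = 0`. -/
def rectCoord (x : Plane) : ℝ × ℝ := ((x i - a) / (b - a), (x j - m) / d)

/-- The inverse of `rectCoord`. -/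
def rectPoint (z : ℝ × ℝ) : Plane := fun k => if k = i then a + z.1 * (b - a) else m + z.2 * d

lemma continuous_rectPoint_rectCoord :
    Continuous fun x => rectPoint i a b m d (rectRetraction (rectCoord i j a b m d x)) := by
  refine continuous_pi fun k => ?_
  have := continuous_rectRetraction
  simp only [rectPoint, rectCoord]
  split_ifs <;> fun_prop

lemma convex_rectangle : Convex ℝ (rectangle i j a b c d) :=
  ((convex_uIcc a b).is_linear_preimage (LinearMap.proj (R := ℝ) i).isLinear).inter
    ((convex_Icc _ _).is_linear_preimage (LinearMap.proj (R := ℝ) j).isLinear)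

variable {i j a b c m d}

lemma rectPoint_of_ne (hij : i ≠ j) (z : ℝ × ℝ) : rectPoint i a b m d z j = m + z.2 * d :=
  if_neg hij.symm

lemma rectPoint_self (z : ℝ × ℝ) : rectPoint i a b m d z i = a + z.1 * (b - a) := if_pos rfl

lemma rectCoord_mem (hab : a ≠ b) (hd : 0 ≤ d) {x : Plane}
    (hx : x ∈ rectangle i j a b (m - d) (m + d)) :
    rectCoord i j a b m d x ∈ Icc 0 1 ×ˢ Icc (-1) 1 := by
  obtain ⟨hi, hj⟩ := hx
  rw [← segment_eq_uIcc, segment_eq_image'] at hi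
  obtain ⟨θ, hθ, hi⟩ := hi
  refine ⟨mem_of_eq_of_mem ?_ hθ, ?_⟩
  · simp [rectCoord, ← hi, sub_ne_zero.2 hab.symm]
  · rw [mem_Icc, ← abs_le, rectCoord, abs_div, abs_of_nonneg hd]
    exact div_le_one_of_le₀ (abs_le.2 ⟨by linarith [hj.1], by linarith [hj.2]⟩) hd

lemma rectPoint_mem (hij : i ≠ j) (hd : 0 ≤ d) {z : ℝ × ℝ} (hz : z ∈ Icc 0 1 ×ˢ Icc (-1) 1) :
    rectPoint i a b m d z ∈ rectangle i j a b (m - d) (m + d) := by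
  obtain ⟨hs, hw⟩ := hz
  constructor
  · rw [rectPoint_self]
    exact (convex_uIcc a b).add_smul_sub_mem left_mem_uIcc right_mem_uIcc hs
  · rw [rectPoint_of_ne hij]
    constructor <;> nlinarith [hw.1, hw.2]

lemma rectPoint_rectCoord (hij : i ≠ j) (hab : a ≠ b) {x : Plane}
    (hx : x ∈ rectangle i j a b (m - d) (m + d)) :
    rectPoint i a b m d (rectCoord i j a b m d x) = x := by
  funext k
  obtain rfl | rfl : k = i ∨ k = j := by omega
  · rw [rectPoint_self, rectCoord, div_mul_cancel₀ _ (sub_ne_zero.2 hab.symm), add_sub_cancel]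
  · rw [rectPoint_of_ne hij, rectCoord]
    rcases eq_or_ne d 0 with rfl | hd₀
    · rw [mul_zero]
      exact le_antisymm (by simpa using hx.2.1) (by simpa using hx.2.2)
    · rw [div_mul_cancel₀ _ hd₀, add_sub_cancel]

lemma of_rectangle (hij : i ≠ j) (hab : a ≠ b) (hcd : c ≤ d)
    (hY : ∀ x ∈ rectangle i j a b c d, x ∈ Y ↔ x i = a ∨ c ≠ d ∧ (x j = c ∨ x j = d)) :
    SDR (rectangle i j a b c d) (rectangle i j a b c d ∩ Y) := by
  obtain ⟨m, r, rfl, rfl⟩ : ∃ m r, c = m - r ∧ d = m + r :=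
    ⟨(c + d) / 2, (d - c) / 2, by ring, by ring⟩
  have hr : 0 ≤ r := by linarith
  refine of_convex (r := fun x => rectPoint i a b m r (rectRetraction (rectCoord i j a b m r x)))
    (convex_rectangle ..) (continuous_rectPoint_rectCoord ..).continuousOn ?_ ?_
  · intro x hx
    have hmem := rectPoint_mem (a := a) (b := b) (m := m) hij hr
      (rectRetraction_mem (rectCoord_mem hab hr hx))
    refine ⟨hmem, hmem, (hY _ hmem).2 ?_⟩
    rw [rectPoint_self, rectPoint_of_ne hij]
    rcases rectRetraction_side (rectCoord i j a b m r x) with h | ⟨hw, h⟩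
    · exact .inl (by simp [h])
    · refine .inr ⟨fun hmr => hw ?_, h.imp (fun h => ?_) fun h => ?_⟩
      · obtain rfl : r = 0 := by linarith
        exact div_zero _
      · rw [h]; ring
      · rw [h]; ring
  · rintro x ⟨hx, -, hxY⟩
    rw [rectRetraction_eq_self (rectCoord_mem hab hr hx), rectPoint_rectCoord hij hab hx]
    rcases (hY x hx).1 hxY with h | ⟨hne, h⟩
    · exact .inl (by simp [rectCoord, h])
    · have hr₀ : r ≠ 0 := fun hr₀ => hne (by simp [hr₀])
      refine .inr (h.imp (fun h => ?_) fun h => ?_)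
      · rw [rectCoord, h]; field_simp; ring
      · rw [rectCoord, h]; field_simp; ring

end Rectangle

end SDR

/-! ### Grids in the plane -/

/-- A rectangular grid in the plane, with the same lines in both directions. -/
structure Grid where
  line : ℤ → ℝ
  strictMono : StrictMono line
  exists_le : ∀ y, ∃ i, line i ≤ y
  exists_gt : ∀ y, ∃ i, y < line i

namespace Grid

open Filter Topology

variable (g : Grid)

lemma exists_isGreatest (y : ℝ) : ∃ i, IsGreatest {i | g.line i ≤ y} i := by
  obtain ⟨b, hb⟩ := g.exists_gt y
  obtain ⟨i, hi, hmax⟩ := Int.exists_greatest_of_bdd (P := fun i => g.line i ≤ y)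
    ⟨b, fun z hz => (g.strictMono.lt_iff_lt.1 (hz.trans_lt hb)).le⟩ (g.exists_le y)
  exact ⟨i, hi, hmax⟩

/-- The number of the last line at or before `y`. -/
def floor (y : ℝ) : ℤ := (g.exists_isGreatest y).choose

lemma le_floor_iff {i : ℤ} {y : ℝ} : i ≤ g.floor y ↔ g.line i ≤ y :=
  have h := (g.exists_isGreatest y).choose_spec
  ⟨fun hi => (g.strictMono.monotone hi).trans h.1, fun hi => h.2 hi⟩

/-- The doubled coordinate, in the sense of `Cell`, of the line or interval containing `y`. -/
def index (y : ℝ) : ℤ := if g.line (g.floor y) = y then 2 * g.floor y else 2 * g.floor y + 1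

variable {g} {i m : ℤ} {y z : ℝ}

lemma two_mul_le_index : 2 * i ≤ g.index y ↔ g.line i ≤ y := by
  rw [← le_floor_iff, index]
  split_ifs <;> omega

lemma index_le_two_mul : g.index y ≤ 2 * i ↔ y ≤ g.line i := by
  rw [index]
  split_ifs with h
  · conv_rhs => rw [← h, g.strictMono.le_iff_le]
    omega
  · have hlt : g.line (g.floor y) < y := (g.le_floor_iff.1 le_rfl).lt_of_ne h
    refine ⟨fun hi => ?_, fun hi => ?_⟩
    · refine le_of_not_ge fun hy => ?_
      have := g.le_floor_iff.2 hy
      omega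
    · have := g.strictMono.lt_iff_lt.1 (hlt.trans_le hi)
      omega

lemma index_lt_two_mul : g.index y < 2 * i ↔ y < g.line i := by
  rw [← not_le, ← not_le, two_mul_le_index]

lemma two_mul_lt_index : 2 * i < g.index y ↔ g.line i < y := by
  rw [← not_le, ← not_le, index_le_two_mul]

lemma index_eq_two_mul : g.index y = 2 * i ↔ y = g.line i := by
  rw [le_antisymm_iff, le_antisymm_iff, two_mul_le_index, index_le_two_mul]

lemma index_eq_two_mul_add_one :
    g.index y = 2 * i + 1 ↔ y ∈ Ioo (g.line i) (g.line (i + 1)) := by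
  rw [mem_Ioo, ← two_mul_lt_index, ← index_lt_two_mul]
  omega

lemma incident_index_left :
    Incident (g.index y) m ↔ y ∈ Icc (g.line (m / 2)) (g.line ((m + 1) / 2)) := by
  rw [mem_Icc, ← two_mul_le_index, ← index_le_two_mul, Incident]
  omega

lemma incident_index_right :
    Incident m (g.index y) ↔ y ∈ Ioo (g.line ((m - 1) / 2)) (g.line (m / 2 + 1)) := by
  rw [mem_Ioo, ← two_mul_lt_index, ← index_lt_two_mul, Incident]
  omega

lemma eventually_incident_index (g : Grid) (y : ℝ) :
    ∀ᶠ z in 𝓝 y, Incident (g.index y) (g.index z) := by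
  simp only [incident_index_right]
  exact Ioo_mem_nhds (incident_index_right.1 (.inl rfl)).1 (incident_index_right.1 (.inl rfl)).2

lemma index_lineMap (h : Incident (g.index y) (g.index z)) {θ : ℝ} (hθ : θ ∈ Ioc 0 1) :
    g.index (AffineMap.lineMap y z θ) = g.index z := by
  obtain ⟨hθ₀, hθ₁⟩ := hθ
  rw [AffineMap.lineMap_apply_module, smul_eq_mul, smul_eq_mul]
  obtain ⟨i, hi | hi⟩ := Int.even_or_odd' (g.index z)
  · have hy : g.index y = 2 * i := by unfold Incident at h; omega
    rw [hi]
    rw [index_eq_two_mul] at *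
    rw [hi, hy]
    ring
  · rw [incident_index_left, hi, show (2 * i + 1) / 2 = i by omega,
      show (2 * i + 1 + 1) / 2 = i + 1 by omega] at h
    rw [hi]
    rw [index_eq_two_mul_add_one] at *
    constructor <;> nlinarith [h.1, h.2, hi.1, hi.2]

lemma infinite_index_preimage (g : Grid) (hm : m % 2 = 1) : (g.index ⁻¹' {m}).Infinite := by
  have : g.index ⁻¹' {m} = Ioo (g.line (m / 2)) (g.line (m / 2 + 1)) := by
    ext y
    rw [← index_eq_two_mul_add_one, mem_preimage, mem_singleton_iff]
    omega
  rw [this]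
  exact Ioo_infinite (g.strictMono (by omega))

lemma index_surjective (g : Grid) : Function.Surjective g.index := fun m => by
  rcases Int.emod_two_eq_zero_or_one m with hm | hm
  · exact ⟨g.line (m / 2), by rw [index_eq_two_mul.2 rfl]; omega⟩
  · exact (g.infinite_index_preimage hm).nonempty

/-- The cell of the grid containing a point. -/
def cell (g : Grid) (x : Plane) : Cell := ⟨g.index (x 0), g.index (x 1)⟩

variable {S S' : Set Cell} {s t : Cell} {p q x : Plane}

lemma cell_surjective (g : Grid) : Function.Surjective g.cell := fun s => by
  obtain ⟨y, hy⟩ := g.index_surjective s.x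
  obtain ⟨z, hz⟩ := g.index_surjective s.y
  exact ⟨![y, z], Cell.ext hy hz⟩

lemma eventually_cell_le (g : Grid) (x : Plane) : ∀ᶠ p in 𝓝 x, g.cell x ≤ g.cell p :=
  ((continuous_apply 0).continuousAt.eventually (g.eventually_incident_index (x 0))).and
    ((continuous_apply 1).continuousAt.eventually (g.eventually_incident_index (x 1)))

lemma isClosed_preimage_cell (g : Grid) (hS : IsLowerSet S) : IsClosed (g.cell ⁻¹' S) :=
  isClosed_iff_frequently.2 fun x hx =>
    have ⟨_, hp, hle⟩ := (hx.and_eventually (g.eventually_cell_le x)).exists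
    hS hle hp

lemma cell_lineMap (h : g.cell p ≤ g.cell q) {θ : ℝ} (hθ : θ ∈ Ioc 0 1) :
    g.cell (AffineMap.lineMap p q θ) = g.cell q :=
  Cell.ext (index_lineMap h.1 hθ) (index_lineMap h.2 hθ)

lemma mem_closure_preimage_cell (h : g.cell x ≤ s) : x ∈ closure (g.cell ⁻¹' {s}) := by
  obtain ⟨q, rfl⟩ := g.cell_surjective s
  have hlim : Tendsto (fun θ : ℝ => AffineMap.lineMap x q θ) (𝓝[>] 0) (𝓝 x) := by
    simpa using (AffineMap.lineMap_continuous (R := ℝ) (p := x) (q := q)).tendsto 0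
      |>.mono_left nhdsWithin_le_nhds
  refine mem_closure_of_tendsto hlim ?_
  filter_upwards [Ioc_mem_nhdsGT zero_lt_one] with θ hθ
  exact cell_lineMap h hθ

lemma infinite_preimage_cell (g : Grid) (hs : ¬ s.IsVertex) : (g.cell ⁻¹' {s}).Infinite := by
  obtain ⟨y, hy⟩ := g.index_surjective s.x
  obtain ⟨z, hz⟩ := g.index_surjective s.y
  by_cases hx : s.x % 2 = 1
  · refine .mono ?_ ((g.infinite_index_preimage hx).image
      (f := fun y => ![y, z]) fun a _ b _ hab => congrFun hab 0)
    rintro _ ⟨y, hy, rfl⟩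
    exact Cell.ext hy hz
  · have hy' : s.y % 2 = 1 := by unfold Cell.IsVertex at hs; omega
    refine .mono ?_ ((g.infinite_index_preimage hy').image
      (f := fun z => ![y, z]) fun a _ b _ hab => congrFun hab 1)
    rintro _ ⟨z, hz, rfl⟩
    exact Cell.ext hy hz

lemma mem_connectedComponentIn_of_le (hp : g.cell p ∈ S) (hq : g.cell q ∈ S)
    (h : g.cell p ≤ g.cell q) : q ∈ connectedComponentIn (g.cell ⁻¹' S) p := by
  refine (convex_segment p q).isPreconnected.subset_connectedComponentIn
    (left_mem_segment ℝ p q) ?_ (right_mem_segment ℝ p q)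
  rw [segment_eq_image_lineMap]
  rintro _ ⟨θ, hθ, rfl⟩
  rcases hθ.1.eq_or_lt with rfl | hθ₀
  · rwa [AffineMap.lineMap_apply_zero]
  · rwa [mem_preimage, cell_lineMap h ⟨hθ₀, hθ.2⟩]

lemma mem_connectedComponentIn_of_reachable (hp : g.cell p ∈ S)
    (h : (Cell.incidenceGraph S).Reachable (g.cell p) (g.cell q)) :
    q ∈ connectedComponentIn (g.cell ⁻¹' S) p := by
  rw [SimpleGraph.reachable_iff_reflTransGen] at h
  generalize ht : g.cell q = t at h
  induction h generalizing q with
  | refl => exact mem_connectedComponentIn_of_le hp (ht ▸ hp) ht.ge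
  | @tail r t _ hrt ih =>
    obtain ⟨x, rfl⟩ := g.cell_surjective r
    subst ht
    rw [connectedComponentIn_eq (ih rfl)]
    obtain ⟨-, ⟨hx, hq, hle⟩ | ⟨hq, hx, hle⟩⟩ := hrt
    · exact mem_connectedComponentIn_of_le hx hq hle
    · rw [← connectedComponentIn_eq (mem_connectedComponentIn_of_le hq hx hle)]
      exact mem_connectedComponentIn hq

lemma reachable_of_mem_connectedComponentIn (hp : g.cell p ∈ S)
    (h : q ∈ connectedComponentIn (g.cell ⁻¹' S) p) :
    (Cell.incidenceGraph S).Reachable (g.cell p) (g.cell q) := by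
  let _ : TopologicalSpace (Cell.incidenceGraph S).ConnectedComponent := ⊥
  have : DiscreteTopology (Cell.incidenceGraph S).ConnectedComponent := ⟨rfl⟩
  have hcont : ContinuousOn (fun x => (Cell.incidenceGraph S).connectedComponentMk (g.cell x))
      (g.cell ⁻¹' S) := fun x hx => by
    refine continuousWithinAt_const.congr_of_eventuallyEq ?_ rfl
    filter_upwards [self_mem_nhdsWithin, nhdsWithin_le_nhds (g.eventually_cell_le x)] with z hz hle
    exact SimpleGraph.ConnectedComponent.sound
      (Cell.incidenceGraph_reachable_of_le hx hz hle).symm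
  exact SimpleGraph.ConnectedComponent.exact <| isPreconnected_connectedComponentIn.constant
    (hcont.mono (connectedComponentIn_subset _ _)) (mem_connectedComponentIn hp) h

lemma sharesEdge_of_edgeTouch (hp : g.cell p ∈ S) (hq : g.cell q ∈ S')
    (h : Cell.EdgeTouch S S' (g.cell p) (g.cell q)) :
    SharesEdge (connectedComponentIn (g.cell ⁻¹' S') q)
      (connectedComponentIn (g.cell ⁻¹' S) p) := by
  obtain ⟨v, t, t', hv, hvt, hvt', ht, ht'⟩ := h
  refine (g.infinite_preimage_cell hv).mono ?_
  rintro z rfl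
  refine ⟨closure_mono ?_ (mem_closure_preimage_cell hvt'),
    closure_mono ?_ (mem_closure_preimage_cell hvt)⟩
  · rintro x rfl
    exact mem_connectedComponentIn_of_reachable hq ht'
  · rintro x rfl
    exact mem_connectedComponentIn_of_reachable hp ht

lemma uniqueNeighbor (h : ∀ C, IsCompOf C (g.cell ⁻¹' S) →
    ∃! T, IsCompOf T (g.cell ⁻¹' S') ∧ SharesEdge T C) : Cell.UniqueNeighbor S S' where
  exists_common_face s hs := by
    obtain ⟨x, rfl⟩ := g.cell_surjective s
    obtain ⟨T, ⟨⟨p, -, rfl⟩, hT⟩, -⟩ := h _ ⟨x, hs, rfl⟩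
    obtain ⟨z, hzT, hzC⟩ := hT.nonempty
    rw [mem_closure_iff_frequently] at hzT hzC
    obtain ⟨q, hq, hzq⟩ := (hzC.and_eventually (g.eventually_cell_le z)).exists
    obtain ⟨q', hq', hzq'⟩ := (hzT.and_eventually (g.eventually_cell_le z)).exists
    exact ⟨g.cell z, g.cell q, g.cell q', connectedComponentIn_subset (g.cell ⁻¹' S') _ hq',
      hzq, hzq', reachable_of_mem_connectedComponentIn hs hq⟩
  reachable s s' t' hs hs' ht' hss' hst' := by
    obtain ⟨x, rfl⟩ := g.cell_surjective s
    obtain ⟨p, rfl⟩ := g.cell_surjective s'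
    obtain ⟨q, rfl⟩ := g.cell_surjective t'
    refine reachable_of_mem_connectedComponentIn hs' ?_
    rw [(h _ ⟨x, hs, rfl⟩).unique ⟨⟨p, hs', rfl⟩, sharesEdge_of_edgeTouch hs hs' hss'⟩
      ⟨⟨q, ht', rfl⟩, sharesEdge_of_edgeTouch hs ht' hst'⟩]
    exact mem_connectedComponentIn ht'

lemma coord_cell (g : Grid) (x : Plane) (k : Fin 2) : (g.cell x).coord k = g.index (x k) := by
  fin_cases k <;> rfl

lemma incident_index_left_iff_mem_uIcc {n : ℤ} (h : Incident n m) (hne : n ≠ m) :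
    Incident (g.index y) m ↔ y ∈ uIcc (g.line (m - n / 2)) (g.line (n / 2)) := by
  rw [incident_index_left]
  obtain ⟨k, rfl, rfl | rfl⟩ : ∃ k, n = 2 * k ∧ (m = 2 * k + 1 ∨ m = 2 * k - 1) :=
    ⟨n / 2, by unfold Incident at h; omega⟩
  · rw [uIcc_of_ge (g.strictMono.monotone (by omega))]
    congr! 3 <;> omega
  · rw [uIcc_of_le (g.strictMono.monotone (by omega))]
    congr! 3 <;> omega

lemma preimage_Iic_eq_rectangle {i j : Fin 2} (hij : i ≠ j) (hle : t ≤ s)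
    (hne : t.coord i ≠ s.coord i) :
    g.cell ⁻¹' Iic s = SDR.rectangle i j
      (g.line (s.coord i - t.coord i / 2)) (g.line (t.coord i / 2))
      (g.line (s.coord j / 2)) (g.line ((s.coord j + 1) / 2)) := by
  ext x
  rw [mem_preimage, mem_Iic, Cell.le_iff_coord hij, coord_cell, coord_cell,
    incident_index_left_iff_mem_uIcc ((Cell.le_iff_coord hij).1 hle).1 hne, incident_index_left]
  rfl

lemma sdr_preimage_Iic {i j : Fin 2} (hij : i ≠ j) (g : Grid) (hle : t ≤ s)
    (hi : t.coord i ≠ s.coord i) (hj : t.coord j = s.coord j) :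
    SDR (g.cell ⁻¹' Iic s) (g.cell ⁻¹' Iic s ∩ g.cell ⁻¹' {s, t}ᶜ) := by
  have hinc := ((Cell.le_iff_coord hij).1 hle).1
  rw [preimage_Iic_eq_rectangle hij hle hi]
  refine SDR.of_rectangle hij (g.strictMono.injective.ne ?_) (g.strictMono.monotone ?_)
    fun x hx => ?_
  · unfold Incident at hinc; omega
  · omega
  · rw [← preimage_Iic_eq_rectangle hij hle hi, mem_preimage, mem_Iic,
      Cell.le_iff_coord hij] at hx
    simp only [mem_preimage, mem_compl_iff, mem_insert_iff, mem_singleton_iff,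
      Cell.eq_iff_coord hij, coord_cell, g.strictMono.injective.ne_iff, ← index_eq_two_mul] at hx ⊢
    unfold Incident at hx hinc
    omega

lemma sdr_of_freePair {K : Set Cell} (hK : IsLowerSet K) (h : Cell.FreePair K s t) :
    SDR (g.cell ⁻¹' Iic s) (g.cell ⁻¹' Iic s ∩ g.cell ⁻¹' {s, t}ᶜ) := by
  obtain ⟨hs, hts, hfree⟩ := h
  by_cases hx : t.x = s.x
  · exact g.sdr_preimage_Iic (i := 1) (j := 0) (by decide) hts.le
      (fun hy => hts.ne (Cell.ext hx hy)) hx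
  · have hle : (⟨s.x, t.y⟩ : Cell) ≤ s := ⟨.inl rfl, hts.le.2⟩
    have hlt : t < ⟨s.x, t.y⟩ :=
      lt_of_le_of_ne ⟨hts.le.1, .inl rfl⟩ fun h => hx (Cell.ext_iff.1 h).1
    exact g.sdr_preimage_Iic (i := 0) (j := 1) (by decide) hts.le hx
      (Cell.ext_iff.1 (hfree _ (hK hle hs) hlt)).2

lemma sdr_of_collapse {K K' : Set Cell} (hK : IsLowerSet K) (h : Cell.Collapse K K') :
    SDR (g.cell ⁻¹' K) (g.cell ⁻¹' K') := by
  have hK' := h.isLowerSet hK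
  obtain ⟨s, t, hst, rfl⟩ := h
  have hsub : Iic s ⊆ K := hK.Iic_subset hst.1
  have hinter : Iic s ∩ {s, t}ᶜ = Iic s ∩ (K \ {s, t}) := by
    rw [sdiff_eq, ← inter_assoc, inter_eq_left.2 hsub]
  have hunion : Iic s ∪ K \ {s, t} = K := by
    refine (union_subset hsub sdiff_subset).antisymm fun r hr => ?_
    by_cases hr' : r ∈ ({s, t} : Set Cell)
    · exact .inl (hr'.elim le_of_eq fun h => le_of_eq_of_le h hst.2.1.le)
    · exact .inr ⟨hr, hr'⟩
  have := sdr_of_freePair (g := g) hK hst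
  rw [← preimage_inter, hinter, preimage_inter] at this
  simpa only [← preimage_union, hunion] using
    this.union (g.isClosed_preimage_cell (isLowerSet_Iic s)) (g.isClosed_preimage_cell hK')

lemma sdr_of_collapses (g : Grid) {K K' : Set Cell} (hK : IsLowerSet K)
    (h : Relation.ReflTransGen Cell.Collapse K K') : SDR (g.cell ⁻¹' K) (g.cell ⁻¹' K') := by
  induction h using Relation.ReflTransGen.head_induction_on with
  | refl => exact SDR.refl _
  | head h hs ih =>
    exact .trans (preimage_mono h.subset) (preimage_mono (Cell.subset_of_collapses hs))
      (sdr_of_collapse hK h) (ih (h.isLowerSet hK))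

end Grid

/-- Every component of `X \ Y` shares a boundary edge with exactly one component of `X ∩ Y` and
exactly one component of `Xᶜ ∩ Yᶜ`. Together, `HasRegularDiff X Y` and `HasRegularDiff Y X` are the
zero-loss condition for two arbitrary subsets of the plane. -/
def HasRegularDiff (X Y : Set Plane) : Prop :=
  ∀ C, IsCompOf C (X ∩ Yᶜ) →
    (∃! T, IsCompOf T (X ∩ Y) ∧ SharesEdge T C) ∧ ∃! T, IsCompOf T (Xᶜ ∩ Yᶜ) ∧ SharesEdge T C

theorem Grid.sdr_inter (g : Grid) {ρ : Push} {A B : Set Cell} (h : Cell.TransversePair ρ A B)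
    (hA : A.Finite) (hreg : HasRegularDiff (g.cell ⁻¹' A) (g.cell ⁻¹' B)) :
    SDR (g.cell ⁻¹' A) (g.cell ⁻¹' A ∩ g.cell ⁻¹' B) :=
  have hAB : Cell.RegularPair ρ A B :=
    { toTransversePair := h
      unique_inter := g.uniqueNeighbor fun C hC => (hreg C hC).1
      unique_compl := g.uniqueNeighbor fun C hC => (hreg C hC).2 }
  g.sdr_of_collapses h.isLowerSet_left (hAB.collapses hA)

/-! ### The grid of thickened pixels -/

lemma thick_closedBall {r s : ℝ} (hr : 0 ≤ r) (hs : 0 ≤ s) (c : Plane) :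
    thick r (closedBall c s) = closedBall c (s + r) := by
  ext y
  refine ⟨fun ⟨x, hx, hxy⟩ => ?_, fun hy => ?_⟩
  · rw [← dist_eq_norm, dist_comm] at hxy
    exact (dist_triangle y x c).trans (by linarith [mem_closedBall.1 hx])
  · obtain ⟨x, hyx, hxc⟩ := exists_dist_le_le hr hs hy
    exact ⟨x, hxc, by rwa [← dist_eq_norm, dist_comm]⟩

lemma closedBall_plane {r : ℝ} (hr : 0 ≤ r) (c : Plane) : closedBall c r =
    {x | x 0 ∈ Icc (c 0 - r) (c 0 + r) ∧ x 1 ∈ Icc (c 1 - r) (c 1 + r)} := by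
  ext x
  simp_rw [← Real.closedBall_eq_Icc, mem_closedBall, dist_pi_le_iff hr, Fin.forall_fin_two]
  rfl

lemma thick_pixel {r : ℝ} (hr : 0 ≤ r) (p : ℕ × ℕ) : thick r (pixel p) =
    {x | x 0 ∈ Icc (p.1 - 1 - r) (p.1 + r) ∧ x 1 ∈ Icc (p.2 - 1 - r) (p.2 + r)} := by
  have pixel_eq : pixel p = closedBall ![(p.1 : ℝ) - 1 / 2, (p.2 : ℝ) - 1 / 2] (1 / 2) := by
    rw [closedBall_plane (by norm_num), pixel]
    norm_num [sub_sub]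
  rw [pixel_eq, thick_closedBall hr (by norm_num), closedBall_plane (by positivity)]
  ext x
  simp only [Matrix.cons_val_zero, Matrix.cons_val_one, mem_Icc, mem_ofPred_eq]
  ring_nf

lemma thick_fg (r : ℝ) (S : Set (ℕ × ℕ)) : thick r (fg S) = ⋃ p ∈ S, thick r (pixel p) := by
  ext y
  simp only [thick, fg, mem_iUnion₂, mem_ofPred_eq]
  tauto

/-- The offsets from an integer of the four nearest lines of the grid formed by the boundary lines
of the `ε`- and `δ`-thickened pixels. -/
def offset (ε δ : ℝ) : Fin 4 → ℝ := ![-δ, -ε, ε, δ]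

/-- The lines of the grid formed by the boundary lines of the `ε`- and `δ`-thickened pixels, in
increasing order; the numbers of the lines near `k` are `4 * k, …, 4 * k + 3`. -/
def pixelLine (ε δ : ℝ) (m : ℤ) : ℝ :=
  (Int.divModEquiv 4 m).1 + offset ε δ (Int.divModEquiv 4 m).2

variable {ε δ : ℝ}

lemma pixelLine_eq {m k : ℤ} {r : Fin 4} (h : m = 4 * k + r) :
    pixelLine ε δ m = k + offset ε δ r := by
  obtain rfl : m = (Int.divModEquiv 4).symm (k, r) := by
    rw [h, Int.divModEquiv_symm_apply, Nat.cast_ofNat, mul_comm]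
  rw [pixelLine, Equiv.apply_symm_apply]

lemma strictMono_offset (hε : 0 < ε) (hεδ : ε < δ) : StrictMono (offset ε δ) :=
  Fin.strictMono_iff_lt_succ.2 <| by
    simpa [offset, Fin.forall_fin_succ, hεδ] using neg_lt_self hε

lemma strictMono_pixelLine (hε : 0 < ε) (hεδ : ε < δ) (hδ : δ < 1 / 2) :
    StrictMono (pixelLine ε δ) := by
  refine strictMono_int_of_lt_succ fun m => ?_
  obtain ⟨k, r, rfl⟩ : ∃ k, ∃ r : Fin 4, m = 4 * k + r :=
    ⟨m / 4, ⟨(m % 4).toNat, by omega⟩, by simp only; omega⟩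
  rw [pixelLine_eq rfl]
  cases r using Fin.lastCases with
  | last =>
    rw [pixelLine_eq (k := k + 1) (r := 0) (by rw [Fin.val_last, Fin.val_zero]; ring)]
    change k + δ < (k + 1 : ℤ) + -δ
    push_cast
    linarith
  | cast r =>
    rw [pixelLine_eq (k := k) (r := r.succ) (by simp [add_assoc])]
    exact add_lt_add_right (strictMono_offset hε hεδ r.castSucc_lt_succ) _

/-- The grid formed by the boundary lines of the `ε`- and `δ`-thickened pixels. -/
def pixelGrid (hε : 0 < ε) (hεδ : ε < δ) (hδ : δ < 1 / 2) : Grid where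
  line := pixelLine ε δ
  strictMono := strictMono_pixelLine hε hεδ hδ
  exists_le y :=
    have ⟨n, hn⟩ := exists_int_lt y
    ⟨4 * n + (0 : Fin 4), pixelLine_eq rfl ▸ (add_neg_le_iff_le_add.2 (by linarith))⟩
  exists_gt y :=
    have ⟨n, hn⟩ := exists_int_gt y
    ⟨4 * n + (3 : Fin 4), pixelLine_eq rfl ▸ lt_add_of_lt_of_pos hn (hε.trans hεδ)⟩

/-- The doubled coordinates of the `k`-th pixel interval, extended to the left by `α` and to the
right by `β` lines of the pixel grid. -/
def pixelInterval (α β k : ℤ) : Set ℤ := Icc (2 * (4 * k - α)) (2 * (4 * k + β))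

/-- The cells of the pixel grid in the pixels of `S`, extended by `α` lines before and by `β` lines
after the last grid line of each pixel. -/
def boxes (α β : ℤ) (S : Set (ℕ × ℕ)) : Set Cell :=
  {s | ∃ p ∈ S, s.x ∈ pixelInterval α β p.1 ∧ s.y ∈ pixelInterval α β p.2}

section Boxes

variable {α β : ℤ} {S : Set (ℕ × ℕ)} {s e t : Cell}

lemma thick_fg_eq_preimage_boxes {r : ℝ} (hr : 0 ≤ r) (g : Grid)
    (hα : ∀ n : ℕ, g.line (4 * n - α) = n - 1 - r) (hβ : ∀ n : ℕ, g.line (4 * n + β) = n + r)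
    (S : Set (ℕ × ℕ)) : thick r (fg S) = g.cell ⁻¹' boxes α β S := by
  ext x
  simp only [thick_fg, thick_pixel hr, mem_iUnion₂, exists_prop, ← hα, ← hβ, mem_preimage, boxes,
    pixelInterval, Grid.cell, mem_Icc, Grid.two_mul_le_index, Grid.index_le_two_mul, mem_ofPred_eq]

lemma finite_boxes (hS : S.Finite) (α β : ℤ) : (boxes α β S).Finite := by
  have hinj : Function.Injective fun s : Cell => (s.x, s.y) := fun s t hst =>
    Cell.ext (Prod.ext_iff.1 hst).1 (Prod.ext_iff.1 hst).2
  refine ((hS.biUnion fun p _ => (finite_Icc (2 * (4 * p.1 - α)) (2 * (4 * p.1 + β))).prod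
    (finite_Icc (2 * (4 * p.2 - α)) (2 * (4 * p.2 + β)))).preimage hinj.injOn).subset ?_
  rintro s ⟨p, hp, hx, hy⟩
  exact mem_biUnion hp ⟨hx, hy⟩

lemma isLowerSet_boxes (α β : ℤ) (S : Set (ℕ × ℕ)) : IsLowerSet (boxes α β S) := by
  have mem_of_incident : ∀ {a b k}, Incident a b → b ∈ pixelInterval α β k →
      a ∈ pixelInterval α β k := fun hab hb => by
    simp only [Incident, pixelInterval, mem_Icc] at *; omega
  rintro t s ⟨hx, hy⟩ ⟨p, hp, htx, hty⟩
  exact ⟨p, hp, mem_of_incident hx htx, mem_of_incident hy hty⟩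

lemma mem_boxes_congr (hx : ∀ k, s.x ∈ pixelInterval α β k ↔ t.x ∈ pixelInterval α β k)
    (hy : ∀ k, s.y ∈ pixelInterval α β k ↔ t.y ∈ pixelInterval α β k) :
    s ∈ boxes α β S ↔ t ∈ boxes α β S :=
  exists_congr fun _ => and_congr_right fun _ => and_congr (hx _) (hy _)

/-- Every line of the pixel grid is pushed into the interior of the thickened pixels that it
bounds. -/
def pixelPush : Push where
  toFun m := if m % 2 = 1 then m else if m % 8 = 0 ∨ m % 8 = 2 then m + 1 else m - 1
  incident m := by unfold Incident; split_ifs <;> omega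
  odd m := by split_ifs <;> omega

lemma pixelPush_mem_pixelInterval_iff (hα : α % 4 = 0 ∨ α % 4 = 3) (hβ : β % 4 = 2 ∨ β % 4 = 3)
    (m k : ℤ) : m ∈ pixelInterval α β k ↔ pixelPush m ∈ pixelInterval α β k := by
  simp only [pixelPush, pixelInterval, mem_Icc]
  split_ifs <;> omega

lemma invariant_boxes (hα : α % 4 = 0 ∨ α % 4 = 3) (hβ : β % 4 = 2 ∨ β % 4 = 3)
    (S : Set (ℕ × ℕ)) : pixelPush.Invariant (boxes α β S) where
  x_iff m _ := mem_boxes_congr (pixelPush_mem_pixelInterval_iff hα hβ m) fun _ => .rfl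
  y_iff _ n := mem_boxes_congr (fun _ => .rfl) (pixelPush_mem_pixelInterval_iff hα hβ n)

/-- No line bounds both an `ε`-thickened and a `δ`-thickened pixel. -/
lemma mem_pixelInterval_iff_of_opposite {a b c : ℤ} (ha : a % 2 = 0)
    (h : b = a - 1 ∧ c = a + 1 ∨ b = a + 1 ∧ c = a - 1) :
    (∀ k, b ∈ pixelInterval 3 2 k ↔ c ∈ pixelInterval 3 2 k) ∨
      ∀ k, b ∈ pixelInterval 4 3 k ↔ c ∈ pixelInterval 4 3 k := by
  simp only [pixelInterval, mem_Icc]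
  by_cases hmod : a % 8 = 0 ∨ a % 8 = 6
  · exact .inl fun k => by omega
  · exact .inr fun k => by omega

lemma transversePair_boxes (P G : Set (ℕ × ℕ)) :
    Cell.TransversePair pixelPush (boxes 3 2 P) (boxes 4 3 G) where
  isLowerSet_left := isLowerSet_boxes 3 2 P
  isLowerSet_right := isLowerSet_boxes 4 3 G
  invariant_left := invariant_boxes (by decide) (by decide) P
  invariant_right := invariant_boxes (by decide) (by decide) G
  agree := by
    rintro s e t (⟨he, -, hs, ht, h⟩ | ⟨-, he, hs, ht, h⟩)
    · exact (mem_pixelInterval_iff_of_opposite he h).imp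
        (fun hx => mem_boxes_congr hx fun k => by rw [hs, ht])
        (fun hx => mem_boxes_congr hx fun k => by rw [hs, ht])
    · exact (mem_pixelInterval_iff_of_opposite he h).imp
        (mem_boxes_congr fun k => by rw [hs, ht])
        (mem_boxes_congr fun k => by rw [hs, ht])

end Boxes

section PixelGrid

variable (hε : 0 < ε) (hεδ : ε < δ) (hδ : δ < 1 / 2) (S : Set (ℕ × ℕ))

lemma thick_fg_eq_preimage_inner :
    thick ε (fg S) = (pixelGrid hε hεδ hδ).cell ⁻¹' boxes 3 2 S :=
  thick_fg_eq_preimage_boxes hε.le _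
    (fun n => (pixelLine_eq (k := n - 1) (r := 1) (by rw [Fin.val_one]; ring)).trans
      (by simp [offset, sub_eq_add_neg]))
    (fun _ => pixelLine_eq (r := 2) rfl) S

lemma thick_fg_eq_preimage_outer :
    thick δ (fg S) = (pixelGrid hε hεδ hδ).cell ⁻¹' boxes 4 3 S :=
  thick_fg_eq_preimage_boxes (hε.trans hεδ).le _
    (fun n => (pixelLine_eq (k := n - 1) (r := 0) (by rw [Fin.val_zero]; ring)).trans
      (by simp [offset, sub_eq_add_neg]))
    (fun _ => pixelLine_eq (r := 3) rfl) S

end PixelGrid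

lemma OnGrid.finite {S : Set (ℕ × ℕ)} {h w : ℕ} (hS : OnGrid S h w) : S.Finite :=
  (toFinite (Icc 1 h ×ˢ Icc 1 w)).subset hS

theorem zero_loss_deformation_retracts_general {P G : Set (ℕ × ℕ)} (hP : P.Finite) (hG : G.Finite)
    {ε δ : ℝ} (hε : 0 < ε) (hεδ : ε < δ) (hδ : δ < 1 / 2)
    (hFP : HasRegularDiff (thick ε (fg P)) (thick δ (fg G)))
    (hFN : HasRegularDiff (thick δ (fg G)) (thick ε (fg P))) :
    SDR (thick ε (fg P)) (thick ε (fg P) ∩ thick δ (fg G)) ∧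
    SDR (thick δ (fg G)) (thick ε (fg P) ∩ thick δ (fg G)) ∧
    SDR (thick ε (fg P) ∪ thick δ (fg G)) (thick ε (fg P)) ∧
    SDR (thick ε (fg P) ∪ thick δ (fg G)) (thick δ (fg G)) := by
  rw [thick_fg_eq_preimage_inner hε hεδ hδ, thick_fg_eq_preimage_outer hε hεδ hδ] at *
  have hPG := transversePair_boxes P G
  have sdr_P := (pixelGrid hε hεδ hδ).sdr_inter hPG (finite_boxes hP 3 2) hFP
  have sdr_G := (pixelGrid hε hεδ hδ).sdr_inter hPG.symm (finite_boxes hG 4 3) hFN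
  have closed_P := (pixelGrid hε hεδ hδ).isClosed_preimage_cell hPG.isLowerSet_left
  have closed_G := (pixelGrid hε hεδ hδ).isClosed_preimage_cell hPG.isLowerSet_right
  refine ⟨sdr_P, inter_comm _ _ ▸ sdr_G, ?_, sdr_P.union closed_P closed_G⟩
  exact union_comm _ _ ▸ sdr_G.union closed_G closed_P

/-- Under the zero-loss hypothesis, all four inclusions in the commutative
square `TP ↪ F_ε(P) ↪ F_ε(P) ∪ F_{2ε}(G)` and `TP ↪ F_{2ε}(G) ↪ F_ε(P) ∪ F_{2ε}(G)` are
deformation retractions. -/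
theorem zero_loss_deformation_retracts
    (h w : ℕ) (P G : Set (ℕ × ℕ)) (hP : OnGrid P h w) (hG : OnGrid G h w)
    (ε : ℝ) (hε0 : 0 < ε) (hε : ε < 1 / 4) (hzero : ZeroLoss P G ε) :
    SDR (thick ε (fg P)) (TPset P G ε) ∧
    SDR (thick (2 * ε) (fg G)) (TPset P G ε) ∧
    SDR (thick ε (fg P) ∪ thick (2 * ε) (fg G)) (thick ε (fg P)) ∧
    SDR (thick ε (fg P) ∪ thick (2 * ε) (fg G)) (thick (2 * ε) (fg G)) := by
  have hFN : HasRegularDiff (thick (2 * ε) (fg G)) (thick ε (fg P)) := by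
    simpa only [HasRegularDiff, inter_comm, FNset, RegularComp, TPset, TNset] using hzero.2
  exact zero_loss_deformation_retracts_general hP.finite hG.finite hε0 (by linarith) (by linarith)
    hzero.1 hFN

end
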